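/- arXiv:0903.2577 — 4 statements merged into one kernel-verified Lean document; each statement's English description precedes it below -/
import Mathlib

section
/- Let α > 3 and set γ = 2α/(α−3) (so that 3/α + 2/γ = 1). There is a constant C = C(α) such that for every smooth, divergence-free vector field u : ℝ³ → ℝ³ which is Schwartz-class, the trilinear term I₁ = ∫_{ℝ³} (u_z · ∇u) · u_z dx dy dz satisfies |I₁| ≤ (1/4) ‖∇u_z‖₂² + C ‖u_z‖₂² (‖u_z‖_α^γ + ‖∇u‖₂²). -/
/-!
Write `w = u_z`, which is divergence free because `u` is. Integrating by parts
(`integral_by_parts`) moves the derivative off `u`: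
`I₁ = ∑ i j, ∫ w_j (∂_j u_i) w_i = -∑ i j, ∫ w_j (∂_j w_i) u_i`.
Hölder's inequality with the exponents `3α` for `u`, `2` for `∇w`, and an interpolation of `w`
between `L²` and `L⁶` (`trilinear_holder`) then gives
`|I₁| ≤ 9 ‖u‖_{3α} ‖∇w‖₂ ‖w‖₂^(1-1/α) ‖w‖₆^(1/α)`.

The decisive ingredient is the anisotropic Sobolev inequality (`anisotropic_sobolev`)
`‖v‖_r³ ≤ K ‖∂₀v‖_{q₀} ‖∂₁v‖_{q₁} ‖∂₂v‖_{q₂}` whenever `r (1/q₀ + 1/q₁ + 1/q₂ - 1) = 3`.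
With `q = (2, 2, α)` and `r = 3α` it bounds `‖u‖_{3α}` by
`‖u_z‖_α^(1/3) ‖∇u‖₂^(2/3)` (`sobolev_mixed`), so that `u_z` enters only through its `L^α` norm;
with `q = (2, 2, 2)` and `r = 6` it is the classical `‖w‖₆ ≤ 12 ‖∇w‖₂` (`sobolev_six`).
It is proved by bounding `|v|^{a_i}`, with `a_i = 1 + r (1 - 1/q_i)`, by the integral of
`a_i |v|^{a_i - 1} |∂_i v|` over the line through the point in direction `i`. Since
`a_0 + a_1 + a_2 = 2r`, the square roots of these three bounds multiply to a bound for `|v|^r`,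
whose integral is controlled by the Loomis–Whitney inequality (`loomis_whitney`) and Hölder.

Altogether `|I₁| ≤ K ‖w‖_α^(1/3) ‖∇u‖₂^(2/3) ‖∇w‖₂^(1+1/α) ‖w‖₂^(1-1/α)`, and Young's
inequality with the weights `1/(3γ)`, `1/3` and `1/2 + 1/(2α)` (`young_absorb`) absorbs the
right-hand side.
-/

open MeasureTheory

noncomputable section

/-- Three-dimensional Euclidean space. -/
abbrev E3 : Type := EuclideanSpace ℝ (Fin 3)

/-- The `i`-th standard basis vector of `ℝ³`. -/
def ee (i : Fin 3) : E3 := EuclideanSpace.single i 1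

/-- The partial derivative of a scalar function in the `i`-th coordinate direction. -/
def pd (i : Fin 3) (f : E3 → ℝ) : E3 → ℝ := fun x => fderiv ℝ f x (ee i)

/-- The partial derivative of a vector field in the `i`-th coordinate direction. -/
def pdv (i : Fin 3) (u : E3 → E3) : E3 → E3 := fun x => fderiv ℝ u x (ee i)

/-- The `Lʳ(ℝ³)` norm of a scalar function. -/
def Lnorm (r : ℝ) (f : E3 → ℝ) : ℝ := (eLpNorm f (ENNReal.ofReal r) volume).toReal

/-- The `Lʳ(ℝ³)` norm of a vector field (with the pointwise Euclidean norm). -/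
def LnormV (r : ℝ) (u : E3 → E3) : ℝ := (eLpNorm u (ENNReal.ofReal r) volume).toReal

/-- The pointwise (Frobenius) norm of the full gradient matrix of a vector field. -/
def gradNormAt (u : E3 → E3) (x : E3) : ℝ :=
  Real.sqrt (∑ i, ∑ j, (fderiv ℝ u x (ee j) i) ^ 2)

/-- The squared pointwise Frobenius norm `|∇u|²` of the gradient of a vector field. -/
def frobSq (u : E3 → E3) (x : E3) : ℝ := ∑ i, ∑ j, (fderiv ℝ u x (ee j) i) ^ 2

/-- The `Lʳ` norm of the full gradient of a vector field. -/
def LnormGrad (r : ℝ) (u : E3 → E3) : ℝ := Lnorm r (gradNormAt u)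

/-- The `i`-th component of the (componentwise) Laplacian of a vector field. -/
def lapC (u : E3 → E3) (x : E3) (i : Fin 3) : ℝ :=
  ∑ j, fderiv ℝ (fun y => fderiv ℝ u y (ee j) i) x (ee j)

/-- The pointwise Euclidean norm `|Δu|` of the Laplacian of a vector field. -/
def lapNormAt (u : E3 → E3) (x : E3) : ℝ := Real.sqrt (∑ i, (lapC u x i) ^ 2)

/-- The Laplacian of a scalar function. -/
def lapR (f : E3 → ℝ) (x : E3) : ℝ :=
  ∑ j, fderiv ℝ (fun y => fderiv ℝ f y (ee j)) x (ee j)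

/-- The pointwise norm `|∇|w|²|` of the gradient of the squared modulus of a vector field. -/
def gradOfSqNormAt (w : E3 → E3) (x : E3) : ℝ :=
  Real.sqrt (∑ j, (pd j (fun y => ‖w y‖ ^ 2) x) ^ 2)

/-- A vector field is divergence free. -/
def DivFree (u : E3 → E3) : Prop := ∀ x, ∑ i, fderiv ℝ u x (ee i) i = 0

/-- A vector field is (the coercion of) a Schwartz map. -/
def SchwartzClassV (f : E3 → E3) : Prop := ∃ g : SchwartzMap E3 E3, ⇑g = f

/-- A scalar function is (the coercion of) a Schwartz map. -/
def SchwartzClassR (f : E3 → ℝ) : Prop := ∃ g : SchwartzMap E3 ℝ, ⇑g = f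

/-- The `H¹` norm of a vector field: `L²` norm plus `L²` norm of the gradient. -/
def H1norm (f : E3 → E3) : ℝ := LnormV 2 f + LnormGrad 2 f

/-- `(u, b, p)` is a smooth, spatially Schwartz-class solution of the 3D incompressible
MHD equations with unit viscosity and magnetic diffusivity for times in the set `S`:
`uₜ + (u·∇)u = Δu − ∇p + (b·∇)b`, `bₜ + (u·∇)b = Δb + (b·∇)u`, `∇·u = 0`, `∇·b = 0`. -/
structure MHDSolution (S : Set ℝ) (u b : ℝ → E3 → E3) (p : ℝ → E3 → ℝ) : Prop where
  smooth_u : ContDiffOn ℝ (⊤ : ℕ∞) (fun q : ℝ × E3 => u q.1 q.2) (S ×ˢ Set.univ)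
  smooth_b : ContDiffOn ℝ (⊤ : ℕ∞) (fun q : ℝ × E3 => b q.1 q.2) (S ×ˢ Set.univ)
  smooth_p : ContDiffOn ℝ (⊤ : ℕ∞) (fun q : ℝ × E3 => p q.1 q.2) (S ×ˢ Set.univ)
  schwartz_u : ∀ t ∈ S, SchwartzClassV (u t)
  schwartz_b : ∀ t ∈ S, SchwartzClassV (b t)
  schwartz_p : ∀ t ∈ S, SchwartzClassR (p t)
  div_u : ∀ t ∈ S, DivFree (u t)
  div_b : ∀ t ∈ S, DivFree (b t)
  eq_u : ∀ t ∈ S, ∀ x : E3, ∀ i : Fin 3,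
    deriv (fun s => u s x i) t + ∑ j, u t x j * fderiv ℝ (u t) x (ee j) i
      = lapC (u t) x i - pd i (p t) x + ∑ j, b t x j * fderiv ℝ (b t) x (ee j) i
  eq_b : ∀ t ∈ S, ∀ x : E3, ∀ i : Fin 3,
    deriv (fun s => b s x i) t + ∑ j, u t x j * fderiv ℝ (b t) x (ee j) i
      = lapC (b t) x i + ∑ j, b t x j * fderiv ℝ (u t) x (ee j) i

/-! ### Integrals along lines and the Loomis–Whitney inequality -/

open Filter Topology in
/-- The fundamental theorem of calculus for `|g|^a` along the half line ending at `x` in direction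
`i`, using that `g` vanishes at infinity. The hypothesis `1 < a` makes `|g|^a` differentiable also
at the zeros of `g`. -/
lemma enorm_rpow_le_lintegral_line (g : SchwartzMap E3 E3) {a : ℝ} (ha : 1 < a)
    (i : Fin 3) (x : Fin 3 → ℝ) :
    ‖g (WithLp.toLp 2 x)‖ₑ ^ a ≤ ∫⁻ t : ℝ, ENNReal.ofReal a *
      (‖g (WithLp.toLp 2 (Function.update x i t))‖ₑ ^ (a - 1) *
        ‖pdv i g (WithLp.toLp 2 (Function.update x i t))‖ₑ) := by
  set c : ℝ → E3 := fun t => WithLp.toLp 2 (Function.update x i t) with hc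
  have hc' : c = fun t => WithLp.toLp 2 (Function.update x i 0) + t • ee i := by
    funext t
    ext j
    by_cases h : j = i
    · subst h; simp [hc, ee]
    · simp [hc, ee, h]
  have hcx : c (x i) = WithLp.toLp 2 x := by simp [hc]
  have hcd : ∀ t, HasDerivAt c (ee i) t := by
    intro t
    rw [hc']
    simpa using ((hasDerivAt_id t).smul_const (ee i)).const_add
      (WithLp.toLp 2 (Function.update x i 0))
  have hgc : ∀ t, HasDerivAt (fun s => g (c s)) (pdv i g (c t)) t := fun t =>
    (g.hasFDerivAt (c t)).comp_hasDerivAt t (hcd t)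
  have hdiff : Differentiable ℝ (fun s => g (c s)) := fun t => (hgc t).differentiableAt
  set φ : ℝ → ℝ := fun t => ‖g (c t)‖ ^ a with hφ
  have hφd : Differentiable ℝ φ := hdiff.norm_rpow ha
  have hbound : ∀ t, ‖deriv φ t‖ₑ ≤ ENNReal.ofReal a * (‖g (c t)‖ₑ ^ (a - 1) *
        ‖pdv i g (c t)‖ₑ) := by
    intro t
    have h1 := norm_fderiv_norm_rpow_le hdiff (x := t) ha
    rw [← norm_deriv_eq_norm_fderiv, ← norm_deriv_eq_norm_fderiv, (hgc t).deriv] at h1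
    rw [← ofReal_norm, ← ofReal_norm, ← ofReal_norm,
      ENNReal.ofReal_rpow_of_nonneg (norm_nonneg _) (by linarith),
      ← ENNReal.ofReal_mul (by positivity), ← ENNReal.ofReal_mul (by positivity)]
    refine ENNReal.ofReal_le_ofReal (h1.trans (le_of_eq (by ring)))
  -- If the derivative is not integrable along the line, the right-hand side is infinite.
  by_cases htop : ∫⁻ t, ‖deriv φ t‖ₑ = ⊤
  · have : ∫⁻ t : ℝ, ENNReal.ofReal a * (‖g (c t)‖ₑ ^ (a - 1) * ‖pdv i g (c t)‖ₑ) = ⊤ :=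
      top_unique (htop ▸ lintegral_mono hbound)
    rw [this]; exact le_top
  have hint : Integrable (deriv φ) :=
    ⟨(measurable_deriv φ).aestronglyMeasurable, lt_top_iff_ne_top.2 htop⟩
  have hcoc : Tendsto c atBot (cocompact E3) := by
    rw [← Metric.cobounded_eq_cocompact, ← tendsto_norm_atTop_iff_cobounded]
    have h2 : ∀ t, |t| ≤ ‖c t‖ := fun t => by
      have := PiLp.norm_apply_le (c t) i
      simpa [hc] using this
    exact tendsto_atTop_mono h2 tendsto_abs_atBot_atTop
  have hlim : Tendsto φ atBot (𝓝 0) := by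
    have h3 : Tendsto (fun t => ‖g (c t)‖) atBot (𝓝 0) := by
      simpa using (g.tendsto_cocompact.comp hcoc).norm
    simpa [Real.zero_rpow (by linarith : a ≠ 0)] using
      h3.rpow_const (p := a) (Or.inr (by linarith))
  have hftc : ∫ t in Set.Iic (x i), deriv φ t = φ (x i) - 0 :=
    integral_Iic_of_hasDerivAt_of_tendsto' (fun t _ => (hφd t).hasDerivAt) hint.integrableOn hlim
  calc ‖g (WithLp.toLp 2 x)‖ₑ ^ a = ‖φ (x i)‖ₑ := by
        rw [hφ, ← ofReal_norm, ← ofReal_norm, ENNReal.ofReal_rpow_of_nonneg (norm_nonneg _)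
          (by linarith)]
        simp only [hcx]
        rw [Real.norm_of_nonneg (by positivity)]
    _ = ‖∫ t in Set.Iic (x i), deriv φ t‖ₑ := by rw [hftc, sub_zero]
    _ ≤ ∫⁻ t in Set.Iic (x i), ‖deriv φ t‖ₑ := enorm_integral_le_lintegral_enorm _
    _ ≤ ∫⁻ t, ‖deriv φ t‖ₑ := setLIntegral_le_lintegral _ _
    _ ≤ _ := lintegral_mono hbound

/-- The Loomis–Whitney inequality in dimension three, for three different functions. It follows from
the grid-lines lemma `lintegral_prod_lintegral_pow_le` for a single function `f`, applied to the
normalized sum `f = ∑ i, F i / A i`, which dominates every `F i / A i` and has integral at most `3`;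
this costs the factor `3 ^ (3 / 2)`. -/
lemma loomis_whitney {F : Fin 3 → (Fin 3 → ℝ) → ENNReal} (hF : ∀ i, Measurable (F i))
    {A : Fin 3 → ENNReal} (hA : ∀ i, ∫⁻ x, F i x ≤ A i) (hA0 : ∀ i, A i ≠ 0)
    (hAtop : ∀ i, A i ≠ ⊤) :
    ∫⁻ x : Fin 3 → ℝ, ∏ i, (∫⁻ t, F i (Function.update x i t)) ^ (1 / 2 : ℝ)
      ≤ (∏ i, A i ^ (1 / 2 : ℝ)) * 3 ^ (3 / 2 : ℝ) := by
  set f : (Fin 3 → ℝ) → ENNReal := fun x => ∑ i, (A i)⁻¹ * F i x with hf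
  have hfm : Measurable f := Finset.measurable_sum _ fun i _ => (hF i).const_mul _
  have hle : ∀ i x, F i x ≤ A i * f x := by
    intro i x
    calc F i x = A i * ((A i)⁻¹ * F i x) := by
          rw [← mul_assoc, ENNReal.mul_inv_cancel (hA0 i) (hAtop i), one_mul]
      _ ≤ A i * f x := by
          gcongr
          exact Finset.single_le_sum (f := fun i => (A i)⁻¹ * F i x) (fun _ _ => zero_le)
            (Finset.mem_univ i)
  have hint : ∫⁻ x, f x ≤ 3 := by
    rw [hf, lintegral_finsetSum _ fun i _ => (hF i).const_mul _]
    calc ∑ i, ∫⁻ x, (A i)⁻¹ * F i x ≤ ∑ i : Fin 3, 1 := by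
          refine Finset.sum_le_sum fun i _ => ?_
          rw [lintegral_const_mul _ (hF i), ← ENNReal.inv_mul_cancel (hA0 i) (hAtop i)]
          gcongr
          exact hA i
      _ = 3 := by simp
  have hgrid := lintegral_prod_lintegral_pow_le (μ := fun _ : Fin 3 => (volume : Measure ℝ))
    -- Hölder conjugate of the dimension `3`; then `1 / (3 - 1) = 1 / 2` is the inner exponent
    (p := 3 / 2) (by rw [Real.holderConjugate_iff]; norm_num) hfm
  calc ∫⁻ x : Fin 3 → ℝ, ∏ i, (∫⁻ t, F i (Function.update x i t)) ^ (1 / 2 : ℝ)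
      ≤ ∫⁻ x : Fin 3 → ℝ, (∏ i, A i ^ (1 / 2 : ℝ)) *
          ∏ i, (∫⁻ t, f (Function.update x i t)) ^ (1 / 2 : ℝ) := by
        refine lintegral_mono fun x => ?_
        simp only
        rw [← Finset.prod_mul_distrib]
        refine Finset.prod_le_prod' fun i _ => ?_
        rw [← ENNReal.mul_rpow_of_nonneg _ _ (by norm_num)]
        gcongr
        rw [← lintegral_const_mul' _ _ (hAtop i)]
        exact lintegral_mono fun t => hle i _
    _ = (∏ i, A i ^ (1 / 2 : ℝ)) *
          ∫⁻ x : Fin 3 → ℝ, ∏ i, (∫⁻ t, f (Function.update x i t)) ^ (1 / 2 : ℝ) := by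
        refine lintegral_const_mul' _ _ (ENNReal.prod_ne_top fun i _ => ?_)
        exact ENNReal.rpow_ne_top_of_nonneg (by norm_num) (hAtop i)
    _ ≤ _ := by
        gcongr
        refine le_trans ?_ (hgrid.trans (ENNReal.rpow_le_rpow hint (by norm_num)))
        norm_num [volume_pi]

/-! ### Anisotropic Sobolev inequality -/

open LineDeriv in
/-- The partial derivative of a Schwartz field, as a Schwartz map. -/
def pdS (i : Fin 3) (g : SchwartzMap E3 E3) : SchwartzMap E3 E3 := ∂_{ee i} g

lemma coe_pdS (i : Fin 3) (g : SchwartzMap E3 E3) : ⇑(pdS i g) = pdv i g := rfl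

lemma lintegral_enorm_rpow_eq_of_memLp {F : Type*} [NormedAddCommGroup F] {f : E3 → F} {r : ℝ}
    (hr : 0 < r) (hf : MemLp f (ENNReal.ofReal r) volume) :
    ∫⁻ x, ‖f x‖ₑ ^ r = ENNReal.ofReal ((eLpNorm f (ENNReal.ofReal r) volume).toReal ^ r) := by
  have h0 : ENNReal.ofReal r ≠ 0 := by simpa using hr
  have h1 := eLpNorm_eq_lintegral_rpow_enorm_toReal (f := f) (μ := volume) h0
    ENNReal.ofReal_ne_top
  rw [ENNReal.toReal_ofReal hr.le] at h1
  rw [← ENNReal.ofReal_rpow_of_nonneg ENNReal.toReal_nonneg hr.le,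
    ENNReal.ofReal_toReal hf.2.ne, h1, ← ENNReal.rpow_mul, one_div, inv_mul_cancel₀ hr.ne',
    ENNReal.rpow_one]

lemma lintegral_enorm_rpow_eq (f : SchwartzMap E3 E3) {r : ℝ} (hr : 0 < r) :
    ∫⁻ x, ‖f x‖ₑ ^ r = ENNReal.ofReal (LnormV r f ^ r) :=
  lintegral_enorm_rpow_eq_of_memLp hr (f.memLp _ _)

lemma LnormV_nonneg (r : ℝ) (u : E3 → E3) : 0 ≤ LnormV r u := ENNReal.toReal_nonneg

/-- The anisotropic Sobolev inequality with strict upper bounds `b i` in place of the norms of the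
partial derivatives. The strictness makes every `b i` positive, so that the normalization in
`loomis_whitney` is possible even if some partial derivative vanishes. -/
lemma anisotropic_aux (g : SchwartzMap E3 E3) {q : Fin 3 → ℝ} (hq : ∀ i, 1 < q i) {r : ℝ}
    (hr : 0 < r) (hrq : r * (∑ i, 1 / q i - 1) = 3) {b : Fin 3 → ℝ}
    (hb : ∀ i, LnormV (q i) (pdv i g) < b i) :
    LnormV r g ^ 3 ≤ (27 * ∏ i, (1 + r * (1 - 1 / q i))) * ∏ i, b i := by
  set n := LnormV r g with hn
  have hn0 : 0 ≤ n := LnormV_nonneg _ _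
  have hb0 : ∀ i, 0 < b i := fun i => (LnormV_nonneg _ _).trans_lt (hb i)
  have hθ : ∀ i, 0 < 1 - 1 / q i := fun i => by
    have : 1 / q i < 1 := by rw [div_lt_one (by linarith [hq i])]; exact hq i
    linarith
  set a : Fin 3 → ℝ := fun i => 1 + r * (1 - 1 / q i) with ha
  have ha1 : ∀ i, 1 < a i := fun i => by
    have := mul_pos hr (hθ i)
    simp only [ha]; linarith
  have hasum : ∑ i, a i = 2 * r := by
    simp only [ha, Fin.sum_univ_three] at hrq ⊢
    linarith
  -- The case `n = 0` is separate because a power of `n` is cancelled at the end.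
  rcases hn0.eq_or_lt with h | hnpos
  · rw [← h]
    have : 0 ≤ ∏ i, a i := Finset.prod_nonneg fun i _ => by linarith [ha1 i]
    have : 0 ≤ ∏ i, b i := Finset.prod_nonneg fun i _ => (hb0 i).le
    simp only [ne_eq, OfNat.ofNat_ne_zero, not_false_eq_true, zero_pow]
    positivity
  set G : Fin 3 → E3 → ENNReal := fun i y =>
    ENNReal.ofReal (a i) * (‖g y‖ₑ ^ (a i - 1) * ‖pdv i g y‖ₑ) with hG
  have hgm : Measurable g := g.continuous.measurable
  have hpm : ∀ i, Measurable (pdv i g) := fun i => (pdS i g).continuous.measurable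
  have hGm : ∀ i, Measurable (G i) := fun i =>
    (((hgm.enorm.pow_const _).mul (hpm i).enorm).const_mul _)
  have hmp := PiLp.volume_preserving_toLp (Fin 3)
  set A : Fin 3 → ℝ := fun i => a i * (n ^ (r * (1 - 1 / q i)) * b i) with hA
  have hApos : ∀ i, 0 < A i := fun i => by
    have := ha1 i; have := hb0 i
    simp only [hA]; positivity
  have hGA : ∀ i, ∫⁻ y, G i y ≤ ENNReal.ofReal (A i) := by
    intro i
    have hqi : 0 < q i := by linarith [hq i]
    -- Hölder for `|g|^{a i - 1} |∂_i g|`, where `(a i - 1) / (1 - 1 / q i) = r`.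
    have hol := ENNReal.lintegral_mul_norm_pow_le (μ := (volume : Measure E3))
      (f := fun y => ‖g y‖ₑ ^ r) (g := fun y => ‖pdv i g y‖ₑ ^ (q i))
      (hgm.enorm.pow_const _).aemeasurable ((hpm i).enorm.pow_const _).aemeasurable
      (p := 1 - 1 / q i) (q := 1 / q i) (hθ i).le (by positivity) (by ring)
    rw [lintegral_enorm_rpow_eq g hr, ← coe_pdS, lintegral_enorm_rpow_eq (pdS i g) hqi, coe_pdS,
      ENNReal.ofReal_rpow_of_nonneg (by positivity) (hθ i).le, ← Real.rpow_mul hn0,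
      ENNReal.ofReal_rpow_of_nonneg (Real.rpow_nonneg (LnormV_nonneg _ _) _) (by positivity),
      ← Real.rpow_mul (LnormV_nonneg _ _), mul_one_div_cancel hqi.ne', Real.rpow_one,
      ← ENNReal.ofReal_mul (by positivity)] at hol
    simp only [hG]
    rw [lintegral_const_mul' _ _ ENNReal.ofReal_ne_top, hA,
      ENNReal.ofReal_mul (by linarith [ha1 i])]
    gcongr
    refine (le_of_eq ?_).trans (hol.trans (ENNReal.ofReal_le_ofReal ?_))
    · refine lintegral_congr fun y => ?_
      rw [← ENNReal.rpow_mul, ← ENNReal.rpow_mul, mul_one_div_cancel hqi.ne', ENNReal.rpow_one]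
      simp [ha]
    · have := (hb i).le
      gcongr
  have hLW := loomis_whitney (F := fun i x => G i (WithLp.toLp 2 x))
    (fun i => (hGm i).comp hmp.measurable) (A := fun i => ENNReal.ofReal (A i))
    (fun i => by rw [hmp.lintegral_comp (hGm i)]; exact hGA i)
    (fun i => by simpa using hApos i) (fun i => ENNReal.ofReal_ne_top)
  -- Pointwise, `|g|^r = ∏ i, (|g|^{a i})^(1/2)`, since `∑ i, a i = 2 r`.
  have hkey : ENNReal.ofReal (n ^ r) ≤
      (∏ i, ENNReal.ofReal (A i) ^ (1 / 2 : ℝ)) * 3 ^ (3 / 2 : ℝ) := by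
    refine le_trans ?_ hLW
    rw [hn, ← lintegral_enorm_rpow_eq g hr,
      ← hmp.lintegral_comp (hgm.enorm.pow_const _)]
    refine lintegral_mono fun x => ?_
    calc ‖g (WithLp.toLp 2 x)‖ₑ ^ r
        = ∏ i, (‖g (WithLp.toLp 2 x)‖ₑ ^ a i) ^ (1 / 2 : ℝ) := by
          simp_rw [← ENNReal.rpow_mul]
          simp only [Fin.prod_univ_three]
          rw [← ENNReal.rpow_add_of_nonneg _ _ (by linarith [ha1 0]) (by linarith [ha1 1]),
            ← ENNReal.rpow_add_of_nonneg _ _ (by linarith [ha1 0, ha1 1]) (by linarith [ha1 2])]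
          congr 1
          rw [Fin.sum_univ_three] at hasum
          linarith
      _ ≤ _ := by
          refine Finset.prod_le_prod' fun i _ => ?_
          gcongr
          exact enorm_rpow_le_lintegral_line g (ha1 i) i x
  have hreal : n ^ r ≤ (∏ i, A i ^ (1 / 2 : ℝ)) * 3 ^ (3 / 2 : ℝ) := by
    have h3 : (3 : ENNReal) ^ (3 / 2 : ℝ) = ENNReal.ofReal (3 ^ (3 / 2 : ℝ)) := by
      rw [← ENNReal.ofReal_rpow_of_nonneg (by norm_num) (by norm_num)]; norm_num
    have hA0 : ∀ i, 0 ≤ A i ^ (1 / 2 : ℝ) := fun i => Real.rpow_nonneg (hApos i).le _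
    simp_rw [h3, ENNReal.ofReal_rpow_of_nonneg (hApos _).le (by norm_num : (0 : ℝ) ≤ 1 / 2)] at hkey
    rw [← ENNReal.ofReal_prod_of_nonneg fun i _ => hA0 i,
      ← ENNReal.ofReal_mul (Finset.prod_nonneg fun i _ => hA0 i)] at hkey
    exact (ENNReal.ofReal_le_ofReal_iff
      (mul_nonneg (Finset.prod_nonneg fun i _ => hA0 i) (by positivity))).1 hkey
  have hsq : (n ^ r) ^ 2 ≤ (∏ i, A i) * 27 := by
    have h4 := pow_le_pow_left₀ (by positivity) hreal 2
    rw [mul_pow, ← Finset.prod_pow] at h4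
    have h5 : ∀ i, (A i ^ (1 / 2 : ℝ)) ^ 2 = A i := fun i => by
      rw [← Real.rpow_natCast, ← Real.rpow_mul (hApos i).le]; norm_num
    have h6 : ((3 : ℝ) ^ (3 / 2 : ℝ)) ^ 2 = 27 := by
      rw [← Real.rpow_natCast, ← Real.rpow_mul (by norm_num)]; norm_num
    simpa only [h5, h6] using h4
  have hprod : ∏ i, A i = (∏ i, a i) * (∏ i, b i) * n ^ (2 * r - 3) := by
    simp only [hA]
    rw [Finset.prod_mul_distrib, Finset.prod_mul_distrib,
      ← Real.rpow_sum_of_pos hnpos]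
    have : ∑ i, r * (1 - 1 / q i) = 2 * r - 3 := by
      rw [← hasum]; simp only [ha, Fin.sum_univ_three]; ring
    rw [this]; ring
  have hsplit : (n ^ r) ^ 2 = n ^ 3 * n ^ (2 * r - 3) := by
    rw [← Real.rpow_natCast, ← Real.rpow_natCast, ← Real.rpow_mul hn0, ← Real.rpow_add hnpos]
    congr 1; push_cast; ring
  rw [hsplit, hprod] at hsq
  have hpw : 0 < n ^ (2 * r - 3) := by positivity
  refine le_of_mul_le_mul_right (hsq.trans (le_of_eq ?_)) hpw
  ring

/-- The anisotropic Sobolev inequality on `ℝ³`, in which each partial derivative is measured in its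
own Lebesgue space. The condition `hrq` on the exponents is the one forced by scaling. -/
lemma anisotropic_sobolev (g : SchwartzMap E3 E3) {q : Fin 3 → ℝ} (hq : ∀ i, 1 < q i) {r : ℝ}
    (hr : 0 < r) (hrq : r * (∑ i, 1 / q i - 1) = 3) :
    LnormV r g ^ 3 ≤ (27 * ∏ i, (1 + r * (1 - 1 / q i))) * ∏ i, LnormV (q i) (pdv i g) := by
  set K : ℝ := 27 * ∏ i, (1 + r * (1 - 1 / q i))
  have hlim : Filter.Tendsto (fun ε : ℝ => K * ∏ i, (LnormV (q i) (pdv i g) + ε))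
      (nhdsWithin 0 (Set.Ioi 0)) (nhds (K * ∏ i, (LnormV (q i) (pdv i g) + 0))) := by
    refine tendsto_nhdsWithin_of_tendsto_nhds ?_
    exact Continuous.tendsto (by fun_prop) 0
  simp only [add_zero] at hlim
  refine ge_of_tendsto hlim ?_
  filter_upwards [self_mem_nhdsWithin] with ε hε
  exact anisotropic_aux g hq hr hrq fun i => by simpa using hε

/-! ### The pointwise norm of the gradient -/

lemma gradNormAt_nonneg (v : E3 → E3) (x : E3) : 0 ≤ gradNormAt v x := Real.sqrt_nonneg _

lemma norm_pdv_le_gradNormAt (v : E3 → E3) (j : Fin 3) (x : E3) :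
    ‖pdv j v x‖ ≤ gradNormAt v x := by
  rw [EuclideanSpace.norm_eq, gradNormAt]
  refine Real.sqrt_le_sqrt (Finset.sum_le_sum fun i _ => ?_)
  rw [Real.norm_eq_abs, sq_abs]
  exact Finset.single_le_sum (f := fun j => (fderiv ℝ v x (ee j) i) ^ 2)
    (fun _ _ => sq_nonneg _) (Finset.mem_univ j)

lemma gradNormAt_le_sum (v : E3 → E3) (x : E3) : gradNormAt v x ≤ ∑ j, ‖pdv j v x‖ := by
  have h : ∑ i, ∑ j, (fderiv ℝ v x (ee j) i) ^ 2 = ∑ j, ‖pdv j v x‖ ^ 2 := by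
    rw [Finset.sum_comm]
    refine Finset.sum_congr rfl fun j _ => ?_
    rw [EuclideanSpace.norm_sq_eq]
    simp [pdv]
  rw [gradNormAt, h]
  refine (Real.sqrt_le_left (Finset.sum_nonneg fun _ _ => norm_nonneg _)).2 ?_
  exact Finset.sum_sq_le_sq_sum_of_nonneg fun _ _ => norm_nonneg _

lemma continuous_gradNormAt (g : SchwartzMap E3 E3) : Continuous (gradNormAt g) := by
  refine Real.continuous_sqrt.comp (continuous_finsetSum _ fun i _ =>
    continuous_finsetSum _ fun j _ => ?_)
  have h : Continuous fun x => pdS j g x i :=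
    (EuclideanSpace.proj (𝕜 := ℝ) i).continuous.comp (pdS j g).continuous
  exact h.pow 2

lemma memLp_gradNormAt (g : SchwartzMap E3 E3) (p : ENNReal) : MemLp (gradNormAt g) p volume := by
  have hs : MemLp (fun x => ∑ j, ‖pdS j g x‖) p volume :=
    memLp_finsetSum _ fun j _ => ((pdS j g).memLp p volume).norm
  refine hs.mono' (continuous_gradNormAt g).aestronglyMeasurable (.of_forall fun x => ?_)
  rw [Real.norm_of_nonneg (gradNormAt_nonneg _ _)]
  exact gradNormAt_le_sum g x

lemma LnormV_pdv_le_LnormGrad (g : SchwartzMap E3 E3) (j : Fin 3) (r : ℝ) :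
    LnormV r (pdv j g) ≤ LnormGrad r g := by
  refine ENNReal.toReal_mono (memLp_gradNormAt g _).2.ne (eLpNorm_mono fun x => ?_)
  rw [Real.norm_of_nonneg (gradNormAt_nonneg _ _)]
  exact norm_pdv_le_gradNormAt g j x

/-! ### Special cases of the anisotropic inequality -/

/-- The case `q = (2, 2, α)`, `r = 3α` of the anisotropic inequality: the vertical derivative enters
only through its `L^α` norm. -/
lemma sobolev_mixed (g : SchwartzMap E3 E3) {α : ℝ} (hα : 1 < α) :
    LnormV (3 * α) g ≤ (27 * ((1 + 3 * α / 2) ^ 2 * (1 + 3 * α * (1 - 1 / α)))) ^ (1 / 3 : ℝ)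
      * (LnormV α (pdv 2 g) ^ (1 / 3 : ℝ) * LnormGrad 2 g ^ (2 / 3 : ℝ)) := by
  have hα0 : 0 < α := by linarith
  have hα1 : 0 ≤ 1 - 1 / α := by
    rw [sub_nonneg, div_le_one hα0]; exact hα.le
  have h := anisotropic_sobolev g (q := ![2, 2, α]) (r := 3 * α)
    (by intro i; fin_cases i <;> simp [hα]) (by positivity)
    (by simp only [Fin.sum_univ_three, Matrix.cons_val]; field_simp; norm_num)
  simp only [Fin.prod_univ_three, Matrix.cons_val] at h
  have hG0 : 0 ≤ LnormGrad 2 g := ENNReal.toReal_nonneg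
  have hn := LnormV_nonneg (3 * α) g
  have ha := LnormV_nonneg α (pdv 2 g)
  set K : ℝ := 27 * ((1 + 3 * α / 2) ^ 2 * (1 + 3 * α * (1 - 1 / α))) with hK
  have hK0 : 0 ≤ K := by positivity
  have h' : LnormV (3 * α) g ^ 3 ≤ K * (LnormV α (pdv 2 g) * LnormGrad 2 g ^ 2) := by
    refine h.trans ?_
    have e : 27 * ((1 + 3 * α * (1 - 1 / 2)) * (1 + 3 * α * (1 - 1 / 2)) *
        (1 + 3 * α * (1 - 1 / α))) = K := by rw [hK]; ring
    rw [e]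
    refine mul_le_mul_of_nonneg_left ?_ hK0
    rw [mul_comm (LnormV α _), sq]
    exact mul_le_mul_of_nonneg_right (mul_le_mul (LnormV_pdv_le_LnormGrad g 0 2)
      (LnormV_pdv_le_LnormGrad g 1 2) (LnormV_nonneg _ _) hG0) ha
  calc LnormV (3 * α) g = (LnormV (3 * α) g ^ 3) ^ (1 / 3 : ℝ) := by
        rw [← Real.rpow_natCast, ← Real.rpow_mul hn]; norm_num
    _ ≤ (K * (LnormV α (pdv 2 g) * LnormGrad 2 g ^ 2)) ^ (1 / 3 : ℝ) := by gcongr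
    _ = _ := by
        rw [Real.mul_rpow hK0 (by positivity), Real.mul_rpow ha (by positivity)]
        congr 2
        rw [← Real.rpow_natCast, ← Real.rpow_mul hG0]; norm_num

/-- The classical Sobolev embedding, as the case `q = (2, 2, 2)`, `r = 6` of the anisotropic
inequality; `12³ = 27 · 4³` is the constant there. -/
lemma sobolev_six (w : SchwartzMap E3 E3) : LnormV 6 w ≤ 12 * LnormGrad 2 w := by
  have h := anisotropic_sobolev w (q := fun _ => 2) (r := 6) (fun _ => one_lt_two) (by norm_num)
    (by simp only [Fin.sum_univ_three]; norm_num)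
  have hD0 : 0 ≤ LnormGrad 2 w := ENNReal.toReal_nonneg
  have hp : ∏ i, LnormV 2 (pdv i w) ≤ LnormGrad 2 w ^ 3 := by
    refine (Finset.prod_le_prod (fun i _ => LnormV_nonneg _ _)
      fun i _ => LnormV_pdv_le_LnormGrad w i 2).trans_eq ?_
    rw [Finset.prod_const, Finset.card_univ, Fintype.card_fin]
  have hK : (27 * ∏ _i : Fin 3, (1 + 6 * (1 - 1 / 2)) : ℝ) = 12 ^ 3 := by
    rw [Fin.prod_univ_three]; norm_num
  rw [hK] at h
  have h12 : (0 : ℝ) ≤ 12 * LnormGrad 2 w := mul_nonneg (by norm_num) hD0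
  refine (pow_le_pow_iff_left₀ (LnormV_nonneg 6 w) h12 three_ne_zero).mp ?_
  rw [mul_pow]
  exact h.trans (mul_le_mul_of_nonneg_left hp (by norm_num))

/-! ### Divergence-free fields and integration by parts -/

/-- The divergence commutes with `∂_z`, by symmetry of the second derivative. -/
lemma div_pdv_two_eq_zero (g : SchwartzMap E3 E3) (hdiv : DivFree g) : DivFree (pdv 2 g) := by
  intro x
  have hd : Differentiable ℝ (fderiv ℝ g) :=
    ((g.smooth 2).fderiv_right (m := 1) (by norm_num)).differentiable (by norm_num)
  have h2 : ∀ v w : E3, fderiv ℝ (fun y => fderiv ℝ g y v) x w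
      = fderiv ℝ (fderiv ℝ g) x w v := by
    intro v w
    rw [fderiv_clm_apply (hd x) (differentiableAt_const v)]
    simp
  have hsymm : IsSymmSndFDerivAt ℝ g x := (g.smooth 2).contDiffAt.isSymmSndFDerivAt (by simp)
  have h0 : fderiv ℝ (fun y => ∑ j, fderiv ℝ g y (ee j) j) x (ee 2) = 0 := by
    have : (fun y => ∑ j, fderiv ℝ g y (ee j) j) = fun _ => (0 : ℝ) := funext hdiv
    simp [this]
  have hdj : ∀ j : Fin 3, DifferentiableAt ℝ (fun y => fderiv ℝ g y (ee j)) x := fun j =>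
    (hd x).clm_apply (differentiableAt_const _)
  have hcomp : ∀ j : Fin 3, HasFDerivAt (fun y => fderiv ℝ g y (ee j) j)
      ((EuclideanSpace.proj (𝕜 := ℝ) j).comp (fderiv ℝ (fun y => fderiv ℝ g y (ee j)) x)) x :=
    fun j => (EuclideanSpace.proj (𝕜 := ℝ) j).hasFDerivAt.comp x (hdj j).hasFDerivAt
  rw [(HasFDerivAt.fun_sum fun j _ => hcomp j).fderiv] at h0
  rw [← h0]
  simp only [_root_.sum_apply, ContinuousLinearMap.comp_apply]
  refine Finset.sum_congr rfl fun j _ => ?_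
  have h3 : fderiv ℝ (pdv 2 g) x (ee j) = fderiv ℝ (fderiv ℝ g) x (ee j) (ee 2) := h2 _ _
  rw [h2, h3, hsymm.eq]
  rfl

/-- The `i`-th component of a Schwartz field. -/
def compS (i : Fin 3) (g : SchwartzMap E3 E3) : SchwartzMap E3 ℝ :=
  SchwartzMap.postcompCLM (𝕜 := ℝ) (EuclideanSpace.proj (𝕜 := ℝ) i) g

lemma compS_apply (i : Fin 3) (g : SchwartzMap E3 E3) (x : E3) : compS i g x = g x i := rfl

lemma fderiv_compS (i : Fin 3) (g : SchwartzMap E3 E3) (x v : E3) :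
    fderiv ℝ (compS i g) x v = fderiv ℝ g x v i := by
  have h : HasFDerivAt (compS i g) ((EuclideanSpace.proj (𝕜 := ℝ) i).comp (fderiv ℝ g x)) x :=
    (EuclideanSpace.proj (𝕜 := ℝ) i).hasFDerivAt.comp x (g.hasFDerivAt x)
  rw [h.fderiv]; rfl

open LineDeriv in
/-- Integration by parts in `∫ (w · ∇g) · w`. The term in which the derivative falls on the
transporting factor `w_j` sums to `(div w) (w · g) = 0`. -/
lemma integral_by_parts (g w : SchwartzMap E3 E3) (hw : DivFree w) :
    ∫ x : E3, ∑ i, ∑ j, w x j * fderiv ℝ g x (ee j) i * w x i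
      = - ∫ x : E3, ∑ i, ∑ j, w x j * fderiv ℝ w x (ee j) i * g x i := by
  let M := ContinuousLinearMap.mul ℝ ℝ
  let H : Fin 3 → Fin 3 → SchwartzMap E3 ℝ := fun i j =>
    SchwartzMap.pairing M (compS j w) (compS i w)
  let L : Fin 3 → Fin 3 → SchwartzMap E3 ℝ := fun i j =>
    SchwartzMap.pairing M (H i j) (∂_{ee j} (compS i g))
  let R : Fin 3 → Fin 3 → SchwartzMap E3 ℝ := fun i j =>
    SchwartzMap.pairing M (∂_{ee j} (H i j)) (compS i g)
  have hLR : ∀ i j, ∫ x, L i j x = - ∫ x, R i j x := fun i j =>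
    SchwartzMap.integral_mul_lineDerivOp_right_eq_neg_left (H i j) (compS i g) (ee j)
  have hL : ∀ i j x, L i j x = w x j * fderiv ℝ g x (ee j) i * w x i := by
    intro i j x
    have : L i j x = w x j * w x i * fderiv ℝ (compS i g) x (ee j) := rfl
    rw [this, fderiv_compS]; ring
  have hR : ∀ i j x, R i j x = w x j * fderiv ℝ w x (ee j) i * g x i
      + w x i * g x i * fderiv ℝ w x (ee j) j := by
    intro i j x
    have h1 : R i j x = fderiv ℝ (fun y => compS j w y * compS i w y) x (ee j) * g x i := rfl
    rw [h1, fderiv_fun_mul (compS j w).differentiableAt (compS i w).differentiableAt]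
    simp only [_root_.add_apply, _root_.smul_apply, smul_eq_mul,
      fderiv_compS, compS_apply]
    ring
  calc ∫ x : E3, ∑ i, ∑ j, w x j * fderiv ℝ g x (ee j) i * w x i
      = ∫ x : E3, ∑ i, ∑ j, L i j x := by simp only [hL]
    _ = ∑ i, ∑ j, ∫ x : E3, L i j x := by
        rw [integral_finsetSum _ fun i _ => integrable_finsetSum _ fun j _ => (L i j).integrable]
        exact Finset.sum_congr rfl fun i _ => integral_finsetSum _ fun j _ => (L i j).integrable
    _ = - ∑ i, ∑ j, ∫ x : E3, R i j x := by
        simp only [hLR, Finset.sum_neg_distrib]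
    _ = - ∫ x : E3, ∑ i, ∑ j, R i j x := by
        rw [integral_finsetSum _ fun i _ => integrable_finsetSum _ fun j _ => (R i j).integrable]
        congr 1
        exact Finset.sum_congr rfl fun i _ =>
          (integral_finsetSum _ fun j _ => (R i j).integrable).symm
    _ = _ := by
        congr 2
        funext x
        simp only [hR, Finset.sum_add_distrib, ← Finset.mul_sum]
        rw [hw x]
        simp

/-! ### Hölder estimate of the trilinear term -/

lemma enorm_trilinear_le (g w : SchwartzMap E3 E3) (x : E3) :
    ‖∑ i, ∑ j, w x j * fderiv ℝ w x (ee j) i * g x i‖ₑ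
      ≤ 9 * (‖g x‖ₑ * ‖gradNormAt w x‖ₑ * ‖w x‖ₑ) := by
  have h : ‖∑ i, ∑ j, w x j * fderiv ℝ w x (ee j) i * g x i‖
      ≤ 9 * (‖g x‖ * ‖gradNormAt w x‖ * ‖w x‖) := by
    calc ‖∑ i, ∑ j, w x j * fderiv ℝ w x (ee j) i * g x i‖
        ≤ ∑ i : Fin 3, ∑ j : Fin 3, ‖g x‖ * ‖gradNormAt w x‖ * ‖w x‖ := by
          refine (norm_sum_le _ _).trans (Finset.sum_le_sum fun i _ =>
            (norm_sum_le _ _).trans (Finset.sum_le_sum fun j _ => ?_))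
          have h1 : ‖fderiv ℝ w x (ee j) i‖ ≤ ‖gradNormAt w x‖ := by
            rw [Real.norm_of_nonneg (gradNormAt_nonneg _ _)]
            exact (PiLp.norm_apply_le (pdv j w x) i).trans (norm_pdv_le_gradNormAt w j x)
          calc ‖w x j * fderiv ℝ w x (ee j) i * g x i‖
              = ‖w x j‖ * ‖fderiv ℝ w x (ee j) i‖ * ‖g x i‖ := by rw [norm_mul, norm_mul]
            _ ≤ ‖w x‖ * ‖gradNormAt w x‖ * ‖g x‖ := by
                gcongr
                · exact PiLp.norm_apply_le (w x) j
                · exact PiLp.norm_apply_le (g x) i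
            _ = _ := by ring
      _ = _ := by simp; ring
  have h9 : (9 : ENNReal) = ENNReal.ofReal 9 := by norm_num
  simp only [← ofReal_norm]
  rw [h9, ← ENNReal.ofReal_mul (norm_nonneg _), ← ENNReal.ofReal_mul (by positivity),
    ← ENNReal.ofReal_mul (by norm_num)]
  exact ENNReal.ofReal_le_ofReal h

/-- Hölder with the four exponents `1/(3α) + 1/2 + (1 - 1/α)/2 + 1/(6α) = 1`: the last two split
`|w| = |w|^(1 - 1/α) |w|^(1/α)` between `L²` and `L⁶`. -/
lemma trilinear_holder (g w : SchwartzMap E3 E3) {α : ℝ} (hα : 1 < α) :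
    |∫ x : E3, ∑ i, ∑ j, w x j * fderiv ℝ w x (ee j) i * g x i|
      ≤ 9 * (LnormV (3 * α) g * LnormGrad 2 w * LnormV 2 w ^ (1 - 1 / α)
          * LnormV 6 w ^ (1 / α)) := by
  have hα0 : 0 < α := by linarith
  have hα1 : 0 ≤ 1 - 1 / α := by
    rw [sub_nonneg, div_le_one hα0]; exact hα.le
  have hG0 : 0 ≤ LnormGrad 2 w := ENNReal.toReal_nonneg
  have hrhs : 0 ≤ 9 * (LnormV (3 * α) g * LnormGrad 2 w * LnormV 2 w ^ (1 - 1 / α)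
          * LnormV 6 w ^ (1 / α)) := by
    have := LnormV_nonneg (3 * α) g
    have := LnormV_nonneg 2 w
    have := LnormV_nonneg 6 w
    positivity
  rw [← ENNReal.ofReal_le_ofReal_iff hrhs, ← Real.norm_eq_abs, ofReal_norm]
  have hgm : Measurable g := g.continuous.measurable
  have hwm : Measurable w := w.continuous.measurable
  have hDm : Measurable (gradNormAt w) := (continuous_gradNormAt w).measurable
  let f : Fin 4 → E3 → ENNReal := ![fun x => ‖g x‖ₑ ^ (3 * α), fun x => ‖gradNormAt w x‖ₑ ^ (2 : ℝ),
    fun x => ‖w x‖ₑ ^ (2 : ℝ), fun x => ‖w x‖ₑ ^ (6 : ℝ)]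
  let p : Fin 4 → ℝ := ![1 / (3 * α), 1 / 2, (1 - 1 / α) / 2, 1 / (6 * α)]
  have hol := ENNReal.lintegral_prod_norm_pow_le (μ := (volume : Measure E3)) Finset.univ
    (f := f) (p := p)
    (by
      intro i _
      fin_cases i
      · exact (hgm.enorm.pow_const _).aemeasurable
      · exact (hDm.enorm.pow_const _).aemeasurable
      · exact (hwm.enorm.pow_const _).aemeasurable
      · exact (hwm.enorm.pow_const _).aemeasurable)
    (by simp [p, Fin.sum_univ_four]; field_simp; ring)
    (by
      intro i _
      fin_cases i <;> simp only [p] <;> simp <;>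
        first | positivity | (have := hα1; rw [one_div] at this; positivity))
  simp only [Fin.prod_univ_four, f, p, Matrix.cons_val] at hol
  have hD : ∫⁻ x, ‖gradNormAt w x‖ₑ ^ (2 : ℝ) = ENNReal.ofReal (LnormGrad 2 w ^ (2 : ℝ)) :=
    lintegral_enorm_rpow_eq_of_memLp (by norm_num) (memLp_gradNormAt w _)
  have hsimp : ∀ {y r s : ℝ}, 0 ≤ y → 0 ≤ s →
      ENNReal.ofReal (y ^ r) ^ s = ENNReal.ofReal (y ^ (r * s)) := by
    intro y r s hy hs
    rw [ENNReal.ofReal_rpow_of_nonneg (by positivity) hs, Real.rpow_mul hy]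
  rw [lintegral_enorm_rpow_eq g (by positivity), hD, lintegral_enorm_rpow_eq w (by norm_num),
    lintegral_enorm_rpow_eq w (by norm_num), hsimp (LnormV_nonneg _ _) (by positivity),
    hsimp hG0 (by positivity), hsimp (LnormV_nonneg _ _) (by positivity),
    hsimp (LnormV_nonneg _ _) (by positivity)] at hol
  have e1 : 3 * α * (1 / (3 * α)) = 1 := by field_simp
  have e2 : (2 : ℝ) * (1 / 2) = 1 := by norm_num
  have e3 : 2 * ((1 - 1 / α) / 2) = 1 - 1 / α := by ring
  have e4 : 6 * (1 / (6 * α)) = 1 / α := by field_simp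
  rw [e1, e2, e3, e4, Real.rpow_one, Real.rpow_one] at hol
  refine (enorm_integral_le_lintegral_enorm _).trans
    ((lintegral_mono fun x => enorm_trilinear_le g w x).trans ?_)
  rw [lintegral_const_mul' _ _ (by norm_num), ENNReal.ofReal_mul (by norm_num),
    ENNReal.ofReal_mul (mul_nonneg (mul_nonneg (LnormV_nonneg _ _) hG0)
      (Real.rpow_nonneg (LnormV_nonneg _ _) _)),
    ENNReal.ofReal_mul (mul_nonneg (LnormV_nonneg _ _) hG0),
    ENNReal.ofReal_mul (LnormV_nonneg _ _)]
  have h9 : ENNReal.ofReal 9 = 9 := by norm_num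
  rw [h9]
  gcongr
  refine (le_of_eq (lintegral_congr fun x => ?_)).trans hol
  simp only [← ENNReal.rpow_mul]
  rw [e1, e2, e3, e4, ENNReal.rpow_one, ENNReal.rpow_one, mul_assoc _ (‖w x‖ₑ ^ _),
    ← ENNReal.rpow_add_of_nonneg _ _ hα1 (by positivity), sub_add_cancel, ENNReal.rpow_one]

/-! ### Absorption by the inequality of Young -/

/-- Young's inequality for the three quantities `L b² a^γ`, `L b² G²` and `D²/4`, with weights
`θ₁ = (α - 3)/(6α) = 1/(3γ)`, `1/3` and `θ₃ = 1/2 + 1/(2α)`. The constant `L` is chosen so that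
their weighted geometric mean is exactly the left-hand side. -/
lemma young_absorb {α : ℝ} (hα : 3 < α) {K : ℝ} (hK : 0 ≤ K) :
    ∃ C : ℝ, ∀ a b G D : ℝ, 0 ≤ a → 0 ≤ b → 0 ≤ G → 0 ≤ D →
      K * (a ^ (1 / 3 : ℝ) * G ^ (2 / 3 : ℝ) * D ^ (1 + 1 / α) * b ^ (1 - 1 / α))
        ≤ (1 / 4) * D ^ 2 + C * b ^ 2 * (a ^ (2 * α / (α - 3)) + G ^ 2) := by
  have hα0 : 0 < α := by linarith
  have hα3 : 0 < α - 3 := by linarith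
  set θ₁ : ℝ := (α - 3) / (6 * α) with h1
  set θ₃ : ℝ := 1 / 2 + 1 / (2 * α) with h3
  have hθ₁ : 0 < θ₁ := by positivity
  have hθ₃ : 0 < θ₃ := by positivity
  have hsum : θ₁ + 1 / 3 + θ₃ = 1 := by rw [h1, h3]; field_simp; ring
  set L : ℝ := (K * 4 ^ θ₃) ^ (1 / (θ₁ + 1 / 3)) with hL
  have hL0 : 0 ≤ L := by positivity
  refine ⟨L, fun a b G D ha hb hG hD => ?_⟩
  have hX1 : 0 ≤ L * b ^ 2 * a ^ (2 * α / (α - 3)) := by positivity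
  have hX2 : 0 ≤ L * b ^ 2 * G ^ 2 := by positivity
  have hX3 : 0 ≤ D ^ 2 / 4 := by positivity
  have hy := Real.geom_mean_le_arith_mean3_weighted hθ₁.le (by norm_num : (0 : ℝ) ≤ 1 / 3) hθ₃.le
    hX1 hX2 hX3 hsum
  have hLpow : L ^ θ₁ * L ^ (1 / 3 : ℝ) = K * 4 ^ θ₃ := by
    rw [← Real.rpow_add_of_nonneg hL0 hθ₁.le (by norm_num), hL, ← Real.rpow_mul (by positivity),
      one_div_mul_cancel (by positivity), Real.rpow_one]
  have hbpow : (b ^ 2) ^ θ₁ * (b ^ 2) ^ (1 / 3 : ℝ) = b ^ (1 - 1 / α) := by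
    rw [← Real.rpow_add_of_nonneg (by positivity) hθ₁.le (by norm_num), ← Real.rpow_natCast,
      ← Real.rpow_mul hb]
    congr 1
    rw [h1]; push_cast; field_simp; ring
  have hapow : (a ^ (2 * α / (α - 3))) ^ θ₁ = a ^ (1 / 3 : ℝ) := by
    rw [← Real.rpow_mul ha]
    congr 1
    rw [h1]; field_simp; norm_num
  have hGpow : (G ^ 2) ^ (1 / 3 : ℝ) = G ^ (2 / 3 : ℝ) := by
    rw [← Real.rpow_natCast, ← Real.rpow_mul hG]; norm_num
  have hDpow : (D ^ 2 / 4) ^ θ₃ = D ^ (1 + 1 / α) / 4 ^ θ₃ := by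
    rw [Real.div_rpow (by positivity) (by norm_num), ← Real.rpow_natCast, ← Real.rpow_mul hD]
    congr 2
    rw [h3]; push_cast; field_simp
  have h4 : (4 : ℝ) ^ θ₃ ≠ 0 := by positivity
  have hlhs : (L * b ^ 2 * a ^ (2 * α / (α - 3))) ^ θ₁ * (L * b ^ 2 * G ^ 2) ^ (1 / 3 : ℝ)
      * (D ^ 2 / 4) ^ θ₃
      = K * (a ^ (1 / 3 : ℝ) * G ^ (2 / 3 : ℝ) * D ^ (1 + 1 / α) * b ^ (1 - 1 / α)) := by
    rw [Real.mul_rpow (by positivity) (by positivity), Real.mul_rpow hL0 (by positivity),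
      Real.mul_rpow (by positivity) (by positivity), Real.mul_rpow hL0 (by positivity),
      hapow, hGpow, hDpow, ← hbpow]
    calc _ = (L ^ θ₁ * L ^ (1 / 3 : ℝ)) / 4 ^ θ₃ * (a ^ (1 / 3 : ℝ) * G ^ (2 / 3 : ℝ) *
          D ^ (1 + 1 / α) * ((b ^ 2) ^ θ₁ * (b ^ 2) ^ (1 / 3 : ℝ))) := by ring
      _ = _ := by rw [hLpow, mul_div_cancel_right₀ _ h4]
  rw [hlhs] at hy
  have k1 : θ₁ * (L * b ^ 2 * a ^ (2 * α / (α - 3))) ≤ L * b ^ 2 * a ^ (2 * α / (α - 3)) :=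
    mul_le_of_le_one_left hX1 (by linarith)
  have k2 : (1 / 3) * (L * b ^ 2 * G ^ 2) ≤ L * b ^ 2 * G ^ 2 :=
    mul_le_of_le_one_left hX2 (by norm_num)
  have k3 : θ₃ * (D ^ 2 / 4) ≤ D ^ 2 / 4 := mul_le_of_le_one_left hX3 (by linarith)
  linarith

/-! ### The estimate -/

/-- **Estimate for `I₁`.** For `α > 3` and `γ = 2α/(α−3)` there is a constant `C = C(α)`
such that for every divergence-free Schwartz vector field `u` on `ℝ³`,
`|∫ (u_z·∇u)·u_z| ≤ (1/4)‖∇u_z‖₂² + C ‖u_z‖₂² (‖u_z‖_α^γ + ‖∇u‖₂²)`. -/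
theorem stmt4 (α : ℝ) (hα : 3 < α) :
    ∃ C : ℝ, ∀ u : E3 → E3, SchwartzClassV u → DivFree u →
      |∫ x : E3, ∑ i, ∑ j, pdv 2 u x j * fderiv ℝ u x (ee j) i * pdv 2 u x i|
        ≤ (1/4) * (LnormGrad 2 (pdv 2 u)) ^ 2
          + C * (LnormV 2 (pdv 2 u)) ^ 2
              * ((LnormV α (pdv 2 u)) ^ (2 * α / (α - 3)) + (LnormGrad 2 u) ^ 2) := by
  have hα1 : 1 < α := by linarith
  have hα0 : 0 < α := by linarith
  have hθ : 0 ≤ 1 - 1 / α := by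
    rw [sub_nonneg, div_le_one hα0]; exact hα1.le
  set K₁ : ℝ := (27 * ((1 + 3 * α / 2) ^ 2 * (1 + 3 * α * (1 - 1 / α)))) ^ (1 / 3 : ℝ) with hK₁
  have hK₁0 : 0 ≤ K₁ := by positivity
  obtain ⟨C, hC⟩ := young_absorb hα (K := 9 * (K₁ * 12 ^ (1 / α))) (by positivity)
  refine ⟨C, fun u hu hdiv => ?_⟩
  obtain ⟨g, rfl⟩ := hu
  have hdivw : DivFree (pdS 2 g) := div_pdv_two_eq_zero g hdiv
  have ha := LnormV_nonneg α (pdv 2 g)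
  have hb := LnormV_nonneg 2 (pdv 2 g)
  have hs := LnormV_nonneg 6 (pdv 2 g)
  have hG : 0 ≤ LnormGrad 2 g := ENNReal.toReal_nonneg
  have hD : 0 ≤ LnormGrad 2 (pdv 2 g) := ENNReal.toReal_nonneg
  have hn := sobolev_mixed g hα1
  have h6 := sobolev_six (pdS 2 g)
  have hI := trilinear_holder g (pdS 2 g) hα1
  rw [← abs_neg, ← integral_by_parts g (pdS 2 g) hdivw] at hI
  simp only [coe_pdS] at hI h6
  refine hI.trans (le_trans ?_ (hC _ _ _ _ ha hb hG hD))
  have h6' : LnormV 6 (pdv 2 g) ^ (1 / α) ≤ 12 ^ (1 / α) * LnormGrad 2 (pdv 2 g) ^ (1 / α) := by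
    rw [← Real.mul_rpow (by norm_num) hD]
    gcongr
  calc 9 * (LnormV (3 * α) g * LnormGrad 2 (pdv 2 g) * LnormV 2 (pdv 2 g) ^ (1 - 1 / α)
        * LnormV 6 (pdv 2 g) ^ (1 / α))
      ≤ 9 * ((K₁ * (LnormV α (pdv 2 g) ^ (1 / 3 : ℝ) * LnormGrad 2 g ^ (2 / 3 : ℝ)))
          * LnormGrad 2 (pdv 2 g) * LnormV 2 (pdv 2 g) ^ (1 - 1 / α)
          * (12 ^ (1 / α) * LnormGrad 2 (pdv 2 g) ^ (1 / α))) := by gcongr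
    _ = _ := by
        rw [Real.rpow_add_of_nonneg hD zero_le_one (by positivity), Real.rpow_one]
        ring
end
end

section
/- There is an absolute constant C such that for every smooth Schwartz-class function (or vector field) φ on ℝ³, ‖φ‖₃³ ≤ (1/4) ‖∇_h φ‖₂² + C ‖φ‖₂³ ‖φ_z‖₂, where ∇_h = (∂_x, ∂_y) is the horizontal gradient. Consequently ‖φ‖₃³ ≤ (1/4) ‖∇_h φ‖₂² + C (‖φ‖₂² + ‖φ_z‖₂²) ‖φ‖₂². -/
/-!
The estimate is a Loomis-Whitney argument followed by Young's inequality.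

Integrating `∂ᵢ(φ²) = 2 φ ∂ᵢφ` along the line through a point in direction `eᵢ` bounds `φ²` at that
point by `∫ 2|φ ∂ᵢφ| dxᵢ` (`line_bound`), a function of the other two variables only. Taking the
square roots of these three bounds and multiplying them gives a pointwise bound for `|φ|³`, and the
Loomis-Whitney inequality (`loomis`) integrates it to
`∫ |φ|³ ≤ ∏ᵢ (∫ 2|φ ∂ᵢφ|)^{1/2}` (`main_bound`). By Cauchy-Schwarz (`holder_two`),
`‖φ‖₃⁶ ≤ 8 ‖φ‖₂³ ‖∂₀φ‖₂ ‖∂₁φ‖₂ ‖φ_z‖₂ ≤ 8 ‖∇_h φ‖₂² ‖φ‖₂³ ‖φ_z‖₂`,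
and `(s + t)² ≥ 4 s t` with `s = ‖∇_h φ‖₂² / 4`, `t = 8 ‖φ‖₂³ ‖φ_z‖₂` yields the claim
with `C = 8`. The second inequality follows from `‖φ‖₂ ‖φ_z‖₂ ≤ ‖φ‖₂² + ‖φ_z‖₂²`.

The integral estimates are carried out for Lebesgue integrals with values in `[0, ∞]`, so that
integrability matters only when passing back to real numbers.
-/

open MeasureTheory

noncomputable section

/-! ### One-dimensional bound and Loomis-Whitney inequality -/

/-- The fundamental theorem of calculus for `h²` on `(-∞, t]`. No integrability of `h h'` is
assumed, since the bound is vacuous when the right-hand side is infinite. -/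
theorem one_dim (h h' : ℝ → ℝ) (hd : ∀ t, HasDerivAt h (h' t) t) (hc : Measurable h')
    (h0 : Filter.Tendsto h Filter.atBot (nhds 0)) (t : ℝ) :
    ‖h t‖ₑ ^ 2 ≤ ∫⁻ s, 2 * (‖h s‖ₑ * ‖h' s‖ₑ) := by
  set F : ℝ → ℝ := fun s => 2 * (h s * h' s)
  have hF : ∀ s, HasDerivAt (fun s => h s ^ 2) (F s) s := fun s => by
    simpa [F, mul_assoc] using (hd s).fun_pow 2
  have hcont : Continuous h := continuous_iff_continuousAt.2 fun s => (hd s).continuousAt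
  have hFm : Measurable F := (hcont.measurable.mul hc).const_mul 2
  have hE : ∀ s, ‖F s‖ₑ = 2 * (‖h s‖ₑ * ‖h' s‖ₑ) := fun s => by
    simp only [F, enorm_mul]
    congr 1
    rw [← ofReal_norm]
    simp
  simp_rw [← hE]
  by_cases hfin : (∫⁻ s, ‖F s‖ₑ) = ⊤
  · rw [hfin]; exact le_top
  have hFi : Integrable F := ⟨hFm.aestronglyMeasurable, lt_top_iff_ne_top.2 hfin⟩
  have key := integral_Iic_of_hasDerivAt_of_tendsto' (a := t) (fun s _ => hF s)
    hFi.integrableOn (by simpa using h0.pow 2)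
  rw [sub_zero] at key
  calc ‖h t‖ₑ ^ 2 = ‖∫ s in Set.Iic t, F s‖ₑ := by rw [key, enorm_pow]
    _ ≤ ∫⁻ s in Set.Iic t, ‖F s‖ₑ := enorm_integral_le_lintegral_enorm _
    _ ≤ ∫⁻ s, ‖F s‖ₑ := setLIntegral_le_lintegral _ _

open ENNReal in
/-- The Cauchy-Schwarz inequality for square roots of `[0, ∞]`-valued functions. -/
theorem cs {α : Type*} [MeasurableSpace α] (μ : Measure α) {f g : α → ℝ≥0∞}
    (hf : Measurable f) (hg : Measurable g) :
    ∫⁻ a, f a ^ (1 / 2 : ℝ) * g a ^ (1 / 2 : ℝ) ∂μ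
      ≤ (∫⁻ a, f a ∂μ) ^ (1 / 2 : ℝ) * (∫⁻ a, g a ∂μ) ^ (1 / 2 : ℝ) := by
  have := ENNReal.lintegral_mul_le_Lp_mul_Lq μ Real.HolderConjugate.two_two
    (hf.pow_const (1 / 2 : ℝ)).aemeasurable (hg.pow_const (1 / 2 : ℝ)).aemeasurable
  have e : ∀ x : ℝ≥0∞, (x ^ (1 / 2 : ℝ)) ^ (2 : ℝ) = x := fun x => by
    rw [← ENNReal.rpow_mul]; norm_num
  simp only [e] at this
  exact this

open ENNReal in
/-- The Loomis-Whitney inequality in three dimensions: one application of Cauchy-Schwarz for each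
variable, the factor not depending on that variable being pulled out. -/
theorem loomis {A B D : ℝ → ℝ → ℝ≥0∞} (hA : Measurable (Function.uncurry A))
    (hB : Measurable (Function.uncurry B)) (hD : Measurable (Function.uncurry D)) :
    ∫⁻ x, ∫⁻ y, ∫⁻ z, A y z ^ (1 / 2 : ℝ) * B x z ^ (1 / 2 : ℝ) * D x y ^ (1 / 2 : ℝ)
      ≤ (∫⁻ y, ∫⁻ z, A y z) ^ (1 / 2 : ℝ) * (∫⁻ x, ∫⁻ z, B x z) ^ (1 / 2 : ℝ)
        * (∫⁻ x, ∫⁻ y, D x y) ^ (1 / 2 : ℝ) := by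
  have hA1 : Measurable fun y => ∫⁻ z, A y z := hA.lintegral_prod_right'
  have hB1 : Measurable fun y => ∫⁻ z, B y z := hB.lintegral_prod_right'
  have hD1 : Measurable fun y => ∫⁻ z, D y z := hD.lintegral_prod_right'
  have s1 : ∀ x y, ∫⁻ z, A y z ^ (1 / 2 : ℝ) * B x z ^ (1 / 2 : ℝ) * D x y ^ (1 / 2 : ℝ)
      ≤ (∫⁻ z, B x z) ^ (1 / 2 : ℝ) * ((∫⁻ z, A y z) ^ (1 / 2 : ℝ) * D x y ^ (1 / 2 : ℝ)) := by
    intro x y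
    have mA : Measurable (A y) := hA.comp measurable_prodMk_left
    have mB : Measurable (B x) := hB.comp measurable_prodMk_left
    rw [lintegral_mul_const _ (by fun_prop)]
    calc _ ≤ _ := mul_le_mul_left (cs volume mA mB) _
      _ = _ := by ring
  have s2 : ∀ x, ∫⁻ y, (∫⁻ z, B x z) ^ (1 / 2 : ℝ) * ((∫⁻ z, A y z) ^ (1 / 2 : ℝ)
        * D x y ^ (1 / 2 : ℝ))
      ≤ (∫⁻ y, ∫⁻ z, A y z) ^ (1 / 2 : ℝ) *
        ((∫⁻ z, B x z) ^ (1 / 2 : ℝ) * (∫⁻ y, D x y) ^ (1 / 2 : ℝ)) := by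
    intro x
    have mD : Measurable (D x) := hD.comp measurable_prodMk_left
    rw [lintegral_const_mul _ (by fun_prop)]
    calc _ ≤ _ := mul_le_mul_right (cs volume hA1 mD) _
      _ = _ := by ring
  calc _ ≤ ∫⁻ x, (∫⁻ y, ∫⁻ z, A y z) ^ (1 / 2 : ℝ) *
        ((∫⁻ z, B x z) ^ (1 / 2 : ℝ) * (∫⁻ y, D x y) ^ (1 / 2 : ℝ)) :=
        lintegral_mono fun x => (lintegral_mono fun y => s1 x y).trans (s2 x)
    _ = (∫⁻ y, ∫⁻ z, A y z) ^ (1 / 2 : ℝ) *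
        ∫⁻ x, ((∫⁻ z, B x z) ^ (1 / 2 : ℝ) * (∫⁻ y, D x y) ^ (1 / 2 : ℝ)) :=
        lintegral_const_mul _ (by fun_prop)
    _ ≤ _ := by rw [mul_assoc]; exact mul_le_mul_right (cs volume hB1 hD1) _

/-! ### Estimates on `ℝ³` -/

open ENNReal in
/-- Tonelli's theorem on `E3` in coordinates. -/
theorem lint3 {f : E3 → ℝ≥0∞} (hf : Measurable f) :
    ∫⁻ p, f p = ∫⁻ x, ∫⁻ y, ∫⁻ z, f !₂[x, y, z] := by
  have h1 := (EuclideanSpace.volume_preserving_symm_measurableEquiv_toLp (Fin 3)).symm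
  have h2 := (volume_preserving_piFinSuccAbove (fun _ : Fin 3 => ℝ) 0).symm
  have h3 := (volume_preserving_finTwoArrow ℝ).symm
  have m1 := hf.comp h1.measurable
  have m2 := m1.comp h2.measurable
  refine (h1.lintegral_comp hf).symm.trans ((h2.lintegral_comp m1).symm.trans
    ((lintegral_prod _ m2.aemeasurable).trans (lintegral_congr fun x => ?_)))
  have m3 := m2.comp (measurable_prodMk_left (x := x))
  have m4 := m3.comp h3.measurable
  refine (h3.lintegral_comp m3).symm.trans ((lintegral_prod _ m4.aemeasurable).trans
    (lintegral_congr fun y => lintegral_congr fun z => ?_))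
  refine congrArg f ?_
  ext i
  fin_cases i <;> rfl

/-- `φ²` on a line parallel to the `i`-th axis, parametrised by the `i`-th coordinate, is at most
the integral of `2|φ ∂ᵢφ|` over that line. -/
theorem line_bound (g : SchwartzMap E3 ℝ) (i : Fin 3) (c : ℝ → E3)
    (hc : ∀ t, HasDerivAt c (ee i) t) (hci : ∀ t, c t i = t) (t : ℝ) :
    ‖g (c t)‖ₑ ^ 2 ≤ ∫⁻ s, 2 * (‖g (c s)‖ₑ * ‖pd i g (c s)‖ₑ) := by
  have hcc : Continuous c := continuous_iff_continuousAt.2 fun s => (hc s).continuousAt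
  have hg : Continuous (pd i g) := by
    have : Continuous (fderiv ℝ g) := (g.smooth 1).continuous_fderiv (by norm_num)
    unfold pd
    fun_prop
  refine one_dim (fun s => g (c s)) (fun s => pd i g (c s)) (fun s => ?_)
    (hg.comp hcc).measurable ?_ t
  · exact (g.differentiableAt.hasFDerivAt).comp_hasDerivAt s (hc s)
  · refine g.tendsto_cocompact.comp ?_
    rw [← Metric.cobounded_eq_cocompact, ← tendsto_norm_atTop_iff_cobounded]
    refine Filter.tendsto_atTop_mono (fun s => ?_) Filter.tendsto_abs_atBot_atTop
    simpa [hci] using PiLp.norm_apply_le (c s) i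

open ENNReal in
/-- The multiplicative form of the cubic estimate: Loomis-Whitney applied to the three line bounds. -/
theorem main_bound (g : SchwartzMap E3 ℝ) :
    ∫⁻ p, ‖g p‖ₑ ^ 3 ≤ (∫⁻ p, 2 * (‖g p‖ₑ * ‖pd 0 g p‖ₑ)) ^ (1 / 2 : ℝ)
      * (∫⁻ p, 2 * (‖g p‖ₑ * ‖pd 1 g p‖ₑ)) ^ (1 / 2 : ℝ)
      * (∫⁻ p, 2 * (‖g p‖ₑ * ‖pd 2 g p‖ₑ)) ^ (1 / 2 : ℝ) := by
  have hm : ∀ i, Continuous (pd i g) := fun i => by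
    have : Continuous (fderiv ℝ g) := (g.smooth 1).continuous_fderiv (by norm_num)
    unfold pd
    fun_prop
  have hgc := g.continuous
  set H : Fin 3 → E3 → ℝ≥0∞ := fun i p => 2 * (‖g p‖ₑ * ‖pd i g p‖ₑ) with hH
  have hHm : ∀ i, Measurable (H i) := fun i => by
    have := (hm i).measurable
    have := hgc.measurable
    fun_prop
  have hT : ∀ i, Measurable fun q : ℝ × ℝ × ℝ => H i !₂[q.1, q.2.1, q.2.2] := by
    intro i
    have : Continuous fun q : ℝ × ℝ × ℝ => (!₂[q.1, q.2.1, q.2.2] : E3) := by fun_prop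
    exact (hHm i).comp this.measurable
  -- The line integrals of `2|φ ∂ᵢφ|` in each coordinate direction.
  set A : ℝ → ℝ → ℝ≥0∞ := fun y z => ∫⁻ x, H 0 !₂[x, y, z] with hAdef
  set B : ℝ → ℝ → ℝ≥0∞ := fun x z => ∫⁻ y, H 1 !₂[x, y, z] with hBdef
  set D : ℝ → ℝ → ℝ≥0∞ := fun x y => ∫⁻ z, H 2 !₂[x, y, z] with hDdef
  have hA : Measurable (Function.uncurry A) :=
    Measurable.lintegral_prod_right' (f := fun q : (ℝ × ℝ) × ℝ => H 0 !₂[q.2, q.1.1, q.1.2])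
      ((hT 0).comp (g := fun q : ℝ × ℝ × ℝ => H 0 !₂[q.1, q.2.1, q.2.2])
        (f := fun q : (ℝ × ℝ) × ℝ => (q.2, q.1.1, q.1.2)) (by fun_prop))
  have hB : Measurable (Function.uncurry B) :=
    Measurable.lintegral_prod_right' (f := fun q : (ℝ × ℝ) × ℝ => H 1 !₂[q.1.1, q.2, q.1.2])
      ((hT 1).comp (g := fun q : ℝ × ℝ × ℝ => H 1 !₂[q.1, q.2.1, q.2.2])
        (f := fun q : (ℝ × ℝ) × ℝ => (q.1.1, q.2, q.1.2)) (by fun_prop))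
  have hD : Measurable (Function.uncurry D) :=
    Measurable.lintegral_prod_right' (f := fun q : (ℝ × ℝ) × ℝ => H 2 !₂[q.1.1, q.1.2, q.2])
      ((hT 2).comp (g := fun q : ℝ × ℝ × ℝ => H 2 !₂[q.1, q.2.1, q.2.2])
        (f := fun q : (ℝ × ℝ) × ℝ => (q.1.1, q.1.2, q.2)) (by fun_prop))
  have eA : ∫⁻ p, H 0 p = ∫⁻ y, ∫⁻ z, A y z := by
    rw [lint3 (hHm 0), lintegral_lintegral_swap]
    · refine lintegral_congr fun y => lintegral_lintegral_swap ?_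
      exact ((hT 0).comp (g := fun q : ℝ × ℝ × ℝ => H 0 !₂[q.1, q.2.1, q.2.2])
        (f := fun q : ℝ × ℝ => (q.1, y, q.2)) (by fun_prop)).aemeasurable
    · exact (Measurable.lintegral_prod_right'
        (f := fun q : (ℝ × ℝ) × ℝ => H 0 !₂[q.1.1, q.1.2, q.2])
        ((hT 0).comp (g := fun q : ℝ × ℝ × ℝ => H 0 !₂[q.1, q.2.1, q.2.2])
        (f := fun q : (ℝ × ℝ) × ℝ => (q.1.1, q.1.2, q.2)) (by fun_prop))).aemeasurable
  have eB : ∫⁻ p, H 1 p = ∫⁻ x, ∫⁻ z, B x z := by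
    rw [lint3 (hHm 1)]
    refine lintegral_congr fun x => lintegral_lintegral_swap ?_
    exact ((hT 1).comp (g := fun q : ℝ × ℝ × ℝ => H 1 !₂[q.1, q.2.1, q.2.2])
        (f := fun q : ℝ × ℝ => (x, q.1, q.2)) (by fun_prop)).aemeasurable
  have eD : ∫⁻ p, H 2 p = ∫⁻ x, ∫⁻ y, D x y := lint3 (hHm 2)
  rw [eA, eB, eD]
  refine le_trans ?_ (loomis hA hB hD)
  rw [lint3 (by fun_prop)]
  refine lintegral_mono fun x => lintegral_mono fun y => lintegral_mono fun z => ?_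
  have lift : ∀ {a b : ℝ≥0∞}, a ^ 2 ≤ b → a ≤ b ^ (1 / 2 : ℝ) := fun {a b} h => by
    calc a = (a ^ 2) ^ (1 / 2 : ℝ) := by
          rw [← ENNReal.rpow_natCast, ← ENNReal.rpow_mul]; norm_num
      _ ≤ _ := ENNReal.rpow_le_rpow h (by norm_num)
  have hd : ∀ (i : Fin 3) (q : E3) (t : ℝ),
      HasDerivAt (fun t : ℝ => q + t • ee i) (ee i) t := fun i q t => by
    simpa using ((hasDerivAt_id t).smul_const (ee i)).const_add q
  have e0 : ∀ t : ℝ, (!₂[0, y, z] : E3) + t • ee 0 = !₂[t, y, z] := fun t => by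
    ext i; fin_cases i <;> simp [ee]
  have e1 : ∀ t : ℝ, (!₂[x, 0, z] : E3) + t • ee 1 = !₂[x, t, z] := fun t => by
    ext i; fin_cases i <;> simp [ee]
  have e2 : ∀ t : ℝ, (!₂[x, y, 0] : E3) + t • ee 2 = !₂[x, y, t] := fun t => by
    ext i; fin_cases i <;> simp [ee]
  have a0 := line_bound g 0 (fun t => !₂[t, y, z])
    (fun t => by simpa only [e0] using hd 0 !₂[0, y, z] t) (fun t => by simp) x
  have a1 := line_bound g 1 (fun t => !₂[x, t, z])
    (fun t => by simpa only [e1] using hd 1 !₂[x, 0, z] t) (fun t => by simp) y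
  have a2 := line_bound g 2 (fun t => !₂[x, y, t])
    (fun t => by simpa only [e2] using hd 2 !₂[x, y, 0] t) (fun t => by simp) z
  rw [pow_succ, pow_two]
  exact mul_le_mul' (mul_le_mul' (lift a0) (lift a1)) (lift a2)

theorem holder_two (f h : E3 → ℝ) (hf : MemLp f 2) (hh : MemLp h 2) :
    ∫⁻ p, 2 * (‖f p‖ₑ * ‖h p‖ₑ) ≤ ENNReal.ofReal (2 * (Lnorm 2 f * Lnorm 2 h)) := by
  have n2 : ∀ {u : E3 → ℝ}, MemLp u 2 → ENNReal.ofReal (Lnorm 2 u) = eLpNorm u 2 volume := by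
    intro u hu
    rw [Lnorm, ENNReal.ofReal_toReal] <;> simp [hu.eLpNorm_ne_top]
  rw [ENNReal.ofReal_mul (by norm_num), ENNReal.ofReal_mul (p := Lnorm 2 f) ENNReal.toReal_nonneg, n2 hf, n2 hh,
    lintegral_const_mul' _ _ (by norm_num)]
  have := ENNReal.lintegral_mul_le_Lp_mul_Lq volume Real.HolderConjugate.two_two
    hf.1.enorm hh.1.enorm
  rw [eLpNorm_eq_lintegral_rpow_enorm_toReal (by norm_num) (by norm_num),
    eLpNorm_eq_lintegral_rpow_enorm_toReal (by norm_num) (by norm_num)]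
  simpa using mul_le_mul_right this 2

/-- The concluding algebra, where `X = ‖φ‖₃³`, `N = ‖φ‖₂`, `a, b, c` are the `L²` norms of the
partial derivatives and `G = ‖∇_h φ‖₂`. -/
theorem real_ineq {X N a b c G : ℝ} (hN : 0 ≤ N) (ha : 0 ≤ a) (hb : 0 ≤ b)
    (hc : 0 ≤ c) (haG : a ≤ G) (hbG : b ≤ G)
    (h : X ^ 2 ≤ (2 * (N * a)) * (2 * (N * b)) * (2 * (N * c))) :
    X ≤ 1 / 4 * G ^ 2 + 8 * N ^ 3 * c := by
  have hG : 0 ≤ G := ha.trans haG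
  have hab : a * b ≤ G * G := mul_le_mul haG hbG hb hG
  have hk : 0 ≤ N ^ 3 * c := by positivity
  refine (abs_le_of_sq_le_sq' ?_ (by positivity)).2
  nlinarith [mul_le_mul_of_nonneg_left hab hk, sq_nonneg (1 / 4 * G ^ 2 - 8 * N ^ 3 * c)]

/-- **Anisotropic cubic estimate.** There is an absolute constant `C` such that every
Schwartz function `φ` on `ℝ³` satisfies
`‖φ‖₃³ ≤ (1/4)‖∇_h φ‖₂² + C ‖φ‖₂³ ‖φ_z‖₂`, and consequently
`‖φ‖₃³ ≤ (1/4)‖∇_h φ‖₂² + C (‖φ‖₂² + ‖φ_z‖₂²) ‖φ‖₂²`,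
where `∇_h = (∂_x, ∂_y)` is the horizontal gradient. -/
theorem stmt8 :
    ∃ C : ℝ, ∀ φ : E3 → ℝ, SchwartzClassR φ →
      (Lnorm 3 φ) ^ 3
          ≤ (1/4) * (Lnorm 2 (fun x => Real.sqrt ((pd 0 φ x) ^ 2 + (pd 1 φ x) ^ 2))) ^ 2
            + C * (Lnorm 2 φ) ^ 3 * Lnorm 2 (pd 2 φ) ∧
      (Lnorm 3 φ) ^ 3
          ≤ (1/4) * (Lnorm 2 (fun x => Real.sqrt ((pd 0 φ x) ^ 2 + (pd 1 φ x) ^ 2))) ^ 2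
            + C * ((Lnorm 2 φ) ^ 2 + (Lnorm 2 (pd 2 φ)) ^ 2) * (Lnorm 2 φ) ^ 2 := by
  refine ⟨8, ?_⟩
  rintro _ ⟨g, rfl⟩
  have hpd : ∀ i, MemLp (pd i g) 2 := fun i => by
    have e : pd i g = ⇑(LineDeriv.lineDerivOp (ee i) g) := by
      ext x; rw [SchwartzMap.lineDerivOp_apply_eq_fderiv]; rfl
    rw [e]
    exact SchwartzMap.memLp _ 2 volume
  have hg2 : MemLp g 2 := g.memLp 2 volume
  set G : E3 → ℝ := fun x => Real.sqrt ((pd 0 g x) ^ 2 + (pd 1 g x) ^ 2) with hGdef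
  have hG : MemLp G 2 := by
    refine ((hpd 0).norm.add (hpd 1).norm).mono ?_ (.of_forall fun x => ?_)
    · exact Real.continuous_sqrt.comp_aestronglyMeasurable
        (((hpd 0).1.pow 2).add ((hpd 1).1.pow 2))
    · simp only [hGdef, Pi.add_apply, Real.norm_eq_abs]
      rw [abs_of_nonneg (Real.sqrt_nonneg _), abs_of_nonneg (by positivity)]
      refine Real.sqrt_le_iff.2 ⟨by positivity, ?_⟩
      nlinarith [sq_abs (pd 0 g x), sq_abs (pd 1 g x),
        mul_nonneg (abs_nonneg (pd 0 g x)) (abs_nonneg (pd 1 g x))]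
  -- `‖∂₀φ‖₂` and `‖∂₁φ‖₂` are at most `‖∇_h φ‖₂`; finiteness of the latter is needed since
  -- `Lnorm` sends an infinite norm to `0`.
  have mono : ∀ {u : E3 → ℝ}, (∀ x, u x ^ 2 ≤ (pd 0 g x) ^ 2 + (pd 1 g x) ^ 2) →
      Lnorm 2 u ≤ Lnorm 2 G := fun {u} hu => by
    refine ENNReal.toReal_mono (by simpa using hG.eLpNorm_ne_top) (eLpNorm_mono fun x => ?_)
    rw [Real.norm_eq_abs, Real.norm_eq_abs, abs_of_nonneg (Real.sqrt_nonneg _)]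
    exact Real.abs_le_sqrt (hu x)
  have hX : Lnorm 3 g ^ 3 = (∫⁻ p, ‖g p‖ₑ ^ 3).toReal := by
    rw [Lnorm, eLpNorm_eq_lintegral_rpow_enorm_toReal (by norm_num) (by norm_num),
      ← ENNReal.toReal_pow, ← ENNReal.rpow_natCast, ← ENNReal.rpow_mul]
    norm_num
  have hN : 0 ≤ Lnorm 2 g := ENNReal.toReal_nonneg
  have hn : ∀ i, 0 ≤ Lnorm 2 (pd i g) := fun i => ENNReal.toReal_nonneg
  have hsq : (Lnorm 3 g ^ 3) ^ 2 ≤ (2 * (Lnorm 2 g * Lnorm 2 (pd 0 g))) *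
      (2 * (Lnorm 2 g * Lnorm 2 (pd 1 g))) * (2 * (Lnorm 2 g * Lnorm 2 (pd 2 g))) := by
    have h0 := hn 0
    have h1 := hn 1
    have h2 := hn 2
    rw [hX, ← ENNReal.toReal_pow]
    refine ENNReal.toReal_le_of_le_ofReal (by positivity) ?_
    rw [ENNReal.ofReal_mul (by positivity), ENNReal.ofReal_mul (by positivity)]
    calc _ ≤ _ := pow_le_pow_left₀ zero_le (main_bound g) 2
      _ = (∫⁻ p, 2 * (‖g p‖ₑ * ‖pd 0 g p‖ₑ)) * (∫⁻ p, 2 * (‖g p‖ₑ * ‖pd 1 g p‖ₑ))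
          * (∫⁻ p, 2 * (‖g p‖ₑ * ‖pd 2 g p‖ₑ)) := by
        simp only [mul_pow, ← ENNReal.rpow_natCast, ← ENNReal.rpow_mul]
        norm_num
      _ ≤ _ := mul_le_mul' (mul_le_mul' (holder_two _ _ hg2 (hpd 0))
          (holder_two _ _ hg2 (hpd 1))) (holder_two _ _ hg2 (hpd 2))
  have main := real_ineq hN (hn 0) (hn 1) (hn 2)
    (mono fun x => le_add_of_nonneg_right (sq_nonneg _))
    (mono fun x => le_add_of_nonneg_left (sq_nonneg _)) hsq
  refine ⟨main, main.trans ?_⟩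
  -- `N c ≤ N² + c²`, multiplied by `N²`
  nlinarith [mul_nonneg (sq_nonneg (Lnorm 2 g)) (sq_nonneg (Lnorm 2 g - Lnorm 2 (pd 2 g))),
    mul_nonneg (sq_nonneg (Lnorm 2 g)) (sq_nonneg (Lnorm 2 g)),
    mul_nonneg (sq_nonneg (Lnorm 2 g)) (sq_nonneg (Lnorm 2 (pd 2 g)))]
end
end

section
/- Let μ, λ, γ be parameters satisfying 1 ≤ μ, λ < ∞, 1 < 1/μ + 2/λ ≤ 4, and γ = 3λ / (2 − λ(1 − 1/μ)) (in particular λ(1 − 1/μ) < 2). Then there exists a constant C = C(μ, λ) such that for every smooth compactly supported function φ : ℝ³ → ℝ, ‖φ‖_γ ≤ C ‖φ_x‖_λ^{1/3} ‖φ_y‖_λ^{1/3} ‖φ_z‖_μ^{1/3}. -/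
/-!
The inequality is the Gagliardo–Nirenberg argument with a different power of `φ` on each
coordinate line. Write `p = (λ, λ, μ)` and `aᵢ = 1 + γ (1 - 1/pᵢ)`. Along the `i`-th line,
`|φ|^{aᵢ} ≤ aᵢ ∫ |φ|^{aᵢ-1} |∂ᵢφ|` (`enorm_rpow_le_line`). The hypothesis on `γ` says
`3/γ = ∑ 1/pᵢ - 1`, i.e. `∑ aᵢ = 2γ`, so the product of the square roots of the three estimates
bounds `|φ|^γ`, and the Loomis–Whitney inequality (`loomis_whitney_three`) gives
`∫ |φ|^γ ≤ C ∏ (∫ |φ|^{aᵢ-1} |∂ᵢφ|)^{1/2}`. Since `aᵢ - 1 = γ (1 - 1/pᵢ)`, Hölder bounds the `i`-th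
factor by `(∫ |φ|^γ)^{1-1/pᵢ} ‖∂ᵢφ‖_{pᵢ}`. The integral `∫ |φ|^γ` is finite, so its powers on the
right can be absorbed on the left, which leaves `‖φ‖_γ^{3/2} ≤ C ∏ ‖∂ᵢφ‖_{pᵢ}^{1/2}`
(`anisotropic_sobolev`). All this happens on `Fin 3 → ℝ` in `ℝ≥0∞`; the volume-preserving
identification with `E3` transfers it to the statement.
-/

open MeasureTheory

noncomputable section

open scoped ENNReal in
/-- One-dimensional estimate along a line: `|g|^a ≤ a ∫ |g|^{a-1} |g'|`. -/
theorem enorm_rpow_le_line {g : ℝ → ℝ} (hg : ContDiff ℝ 1 g) (h2g : HasCompactSupport g)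
    {a : ℝ} (ha : 1 ≤ a) (t : ℝ) :
    ‖g t‖ₑ ^ a ≤ ENNReal.ofReal a * ∫⁻ s, ‖g s‖ₑ ^ (a - 1) * ‖deriv g s‖ₑ := by
  rcases ha.eq_or_lt with rfl | ha
  · simpa using (h2g.enorm_le_lintegral_Ici_deriv hg t).trans
      (lintegral_mono' Measure.restrict_le_self le_rfl)
  · lift a to NNReal using by linarith
    have h2 : HasCompactSupport (fun x => ‖g x‖ ^ (a : ℝ)) := by
      refine h2g.comp_left (g := fun y : ℝ => ‖y‖ ^ (a : ℝ)) ?_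
      simp only [norm_zero]
      exact Real.zero_rpow (by linarith)
    calc ‖g t‖ₑ ^ (a : ℝ) = ‖‖g t‖ ^ (a : ℝ)‖ₑ := by
          rw [Real.enorm_rpow_of_nonneg (norm_nonneg _) (by linarith), enorm_norm]
      _ ≤ ∫⁻ y in Set.Iic t, ‖deriv (fun x => ‖g x‖ ^ (a : ℝ)) y‖ₑ :=
          h2.enorm_le_lintegral_Ici_deriv (hg.norm_rpow ha) t
      _ ≤ ∫⁻ y, ‖deriv (fun x => ‖g x‖ ^ (a : ℝ)) y‖ₑ :=
          lintegral_mono' Measure.restrict_le_self le_rfl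
      _ ≤ ∫⁻ y, ENNReal.ofReal a * (‖g y‖ₑ ^ ((a : ℝ) - 1) * ‖deriv g y‖ₑ) := by
          refine lintegral_mono fun y => ?_
          have := enorm_fderiv_norm_rpow_le (hg.differentiable one_ne_zero) (x := y)
            (p := a) (by exact_mod_cast ha)
          simp only [← ofReal_norm, norm_deriv_eq_norm_fderiv] at this ⊢
          simpa only [mul_assoc, ENNReal.ofReal_coe_nnreal] using this
      _ = _ := lintegral_const_mul' _ _ ENNReal.ofReal_ne_top

open scoped ENNReal in
/-- Loomis–Whitney inequality for three functions on `ℝ³`, up to a constant: each `G i` is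
integrated along the `i`-th coordinate line. It follows from the single-function version in
Mathlib, applied to the sum of the `G i` normalised to have integral one. -/
theorem loomis_whitney_three {G : Fin 3 → (Fin 3 → ℝ) → ℝ≥0∞} (hG : ∀ i, Measurable (G i))
    (h0 : ∀ i, ∫⁻ x, G i x ≠ 0) (htop : ∀ i, ∫⁻ x, G i x ≠ ∞) :
    ∫⁻ x, ∏ i, (∫⁻ t, G i (Function.update x i t)) ^ (1 / 2 : ℝ)
      ≤ 3 ^ (3 / 2 : ℝ) * ∏ i, (∫⁻ x, G i x) ^ (1 / 2 : ℝ) := by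
  set I : Fin 3 → ℝ≥0∞ := fun i => ∫⁻ x, G i x with hI
  set f : (Fin 3 → ℝ) → ℝ≥0∞ := fun x => ∑ i, (I i)⁻¹ * G i x with hf
  have hfm : Measurable f := Finset.measurable_fun_sum _ fun i _ => (hG i).const_mul _
  have hif : ∫⁻ x, f x = 3 := by
    rw [hf, lintegral_finsetSum _ fun i _ => (hG i).const_mul _]
    simp_rw [lintegral_const_mul _ (hG _)]
    rw [Finset.sum_congr rfl fun i _ => ENNReal.inv_mul_cancel (h0 i) (htop i)]
    simp
  have hp : Real.HolderConjugate (Fintype.card (Fin 3)) (3 / 2) := by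
    rw [Real.holderConjugate_iff]; norm_num
  have key := lintegral_prod_lintegral_pow_le (fun _ : Fin 3 => (volume : Measure ℝ)) hp hfm
  rw [← volume_pi, hif] at key
  have e : (1 : ℝ) / ((Fintype.card (Fin 3) : ℝ) - 1) = 1 / 2 := by norm_num
  rw [e] at key
  have hP0 : ∏ i, (I i) ^ (1 / 2 : ℝ) ≠ 0 := by
    rw [Finset.prod_ne_zero_iff]
    intro i _
    simp [ENNReal.rpow_eq_zero_iff, h0 i, htop i, hI]
  have hPt : ∏ i, (I i) ^ (1 / 2 : ℝ) ≠ ∞ :=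
    ENNReal.prod_ne_top fun i _ => ENNReal.rpow_ne_top_of_nonneg (by norm_num) (htop i)
  have h3 : (∏ i, (I i) ^ (1 / 2 : ℝ))⁻¹ *
      ∫⁻ x, ∏ i, (∫⁻ t, G i (Function.update x i t)) ^ (1 / 2 : ℝ) ≤ 3 ^ (3 / 2 : ℝ) := by
    refine le_trans ?_ key
    rw [← lintegral_const_mul' _ _ (ENNReal.inv_ne_top.2 hP0)]
    refine lintegral_mono fun x => ?_
    rw [ENNReal.prod_inv_distrib (fun i _ j _ _ => Or.inr
      (ENNReal.rpow_ne_top_of_nonneg (by norm_num) (htop j))), ← Finset.prod_mul_distrib]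
    refine Finset.prod_le_prod' fun i _ => ?_
    rw [← ENNReal.inv_rpow, ← ENNReal.mul_rpow_of_nonneg _ _ (by norm_num),
      ← lintegral_const_mul' _ _ (ENNReal.inv_ne_top.2 (h0 i))]
    gcongr with t
    exact Finset.single_le_sum (f := fun j => (I j)⁻¹ * G j (Function.update x i t))
      (fun _ _ => zero_le) (Finset.mem_univ i)
  rw [mul_comm, ← div_eq_mul_inv, ENNReal.div_le_iff hP0 hPt] at h3
  exact h3

open scoped ENNReal in
/-- The inequality on `Fin 3 → ℝ`, with an arbitrary integrability exponent `p i` for each partial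
derivative. The scaling relation between `γ` and the `p i` is `hγ`. -/
theorem anisotropic_sobolev_s16 {p : Fin 3 → ℝ} (hp : ∀ i, 1 ≤ p i) {γ : ℝ} (hγ0 : 0 < γ)
    (hγ : 3 / γ = ∑ i, 1 / p i - 1) :
    ∃ K : ℝ≥0∞, K ≠ ∞ ∧ ∀ u : (Fin 3 → ℝ) → ℝ, ContDiff ℝ 1 u → HasCompactSupport u →
      eLpNorm u (ENNReal.ofReal γ) volume ≤
        K * ∏ i, eLpNorm (fun x => fderiv ℝ u x (Pi.single i 1)) (ENNReal.ofReal (p i)) volume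
          ^ (1 / 3 : ℝ) := by
  -- The exponents of `u` in the three line estimates; they are chosen so that Hölder's inequality
  -- reproduces `∫ |u|^γ`, and `hγ` says precisely that they add up to `2γ`.
  set a : Fin 3 → ℝ := fun i => 1 + γ * (1 - 1 / p i) with ha_def
  have hq0 : ∀ i, 0 ≤ 1 / p i := fun i => by have := hp i; positivity
  have hq1 : ∀ i, 0 ≤ 1 - 1 / p i := fun i => by
    have := hp i
    rw [sub_nonneg, div_le_one (by linarith)]; exact this
  have ha : ∀ i, 1 ≤ a i := fun i => by
    have := mul_nonneg hγ0.le (hq1 i)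
    simp only [ha_def]; linarith
  have hsum : 3 = γ * (1 / p 0 + 1 / p 1 + 1 / p 2 - 1) := by
    rw [Fin.sum_univ_three] at hγ
    rw [← hγ]; field_simp
  set c : ℝ≥0∞ := (∏ i, ENNReal.ofReal (a i) ^ (1 / 2 : ℝ)) * 3 ^ (3 / 2 : ℝ) with hc
  have hct : c ≠ ∞ := ENNReal.mul_ne_top (ENNReal.prod_ne_top fun i _ =>
    ENNReal.rpow_ne_top_of_nonneg (by norm_num) ENNReal.ofReal_ne_top)
    (ENNReal.rpow_ne_top_of_nonneg (by norm_num) (by norm_num))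
  refine ⟨c ^ (2 / 3 : ℝ), ENNReal.rpow_ne_top_of_nonneg (by norm_num) hct, ?_⟩
  intro u hu h2u
  set D : Fin 3 → (Fin 3 → ℝ) → ℝ := fun i x => fderiv ℝ u x (Pi.single i 1) with hD
  have hDc : ∀ i, Continuous (D i) := fun i =>
    (hu.continuous_fderiv one_ne_zero).clm_apply continuous_const
  set N : ℝ≥0∞ := ∫⁻ x, ‖u x‖ₑ ^ γ with hN
  have hγE : ENNReal.ofReal γ ≠ 0 := by simpa using hγ0
  have hNu : eLpNorm u (ENNReal.ofReal γ) volume = N ^ (1 / γ) := by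
    rw [eLpNorm_eq_lintegral_rpow_enorm_toReal hγE ENNReal.ofReal_ne_top,
      ENNReal.toReal_ofReal hγ0.le]
  have hDu : ∀ i, eLpNorm (D i) (ENNReal.ofReal (p i)) volume
      = (∫⁻ x, ‖D i x‖ₑ ^ p i) ^ (1 / p i) := fun i => by
    have hpi : 0 < p i := by linarith [hp i]
    rw [eLpNorm_eq_lintegral_rpow_enorm_toReal (by simpa using hpi) ENNReal.ofReal_ne_top,
      ENNReal.toReal_ofReal hpi.le]
  have hNt : N ≠ ∞ := by
    have := (hu.continuous.memLp_of_hasCompactSupport (μ := volume) (p := ENNReal.ofReal γ)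
      h2u).eLpNorm_ne_top
    intro h
    rw [hNu, h, ENNReal.top_rpow_of_pos (by positivity)] at this
    exact this rfl
  have hDt : ∀ i, eLpNorm (D i) (ENNReal.ofReal (p i)) volume ≠ ∞ := fun i =>
    ((hDc i).memLp_of_hasCompactSupport (μ := volume)
      (h2u.fderiv_apply ℝ (Pi.single i 1))).eLpNorm_ne_top
  by_cases hN0 : N = 0
  · rw [hNu, hN0, ENNReal.zero_rpow_of_pos (by positivity)]
    exact zero_le
  set G : Fin 3 → (Fin 3 → ℝ) → ℝ≥0∞ := fun i x => ‖u x‖ₑ ^ (a i - 1) * ‖D i x‖ₑ with hG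
  have hGm : ∀ i, Measurable (G i) := fun i =>
    (hu.continuous.measurable.enorm.pow_const _).mul (hDc i).measurable.enorm
  have hHolder : ∀ i, ∫⁻ x, G i x ≤
      N ^ (1 - 1 / p i) * eLpNorm (D i) (ENNReal.ofReal (p i)) volume := fun i => by
    have hpi : p i ≠ 0 := by linarith [hp i]
    rw [hDu]
    refine le_trans (le_of_eq ?_) (ENNReal.lintegral_mul_norm_pow_le (μ := volume)
      (f := fun x => ‖u x‖ₑ ^ γ) (g := fun x => ‖D i x‖ₑ ^ p i)
      (hu.continuous.measurable.enorm.pow_const _).aemeasurable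
      ((hDc i).measurable.enorm.pow_const _).aemeasurable (hq1 i) (hq0 i) (by ring))
    refine lintegral_congr fun x => ?_
    rw [← ENNReal.rpow_mul, ← ENNReal.rpow_mul, mul_one_div_cancel hpi, ENNReal.rpow_one]
    simp [hG, ha_def]
  have hline : ∀ i x, ‖u x‖ₑ ^ a i ≤
      ENNReal.ofReal (a i) * ∫⁻ t, G i (Function.update x i t) := fun i x => by
    have := enorm_rpow_le_line (g := u ∘ Function.update x i)
      (hu.comp (by convert! contDiff_update 1 x i))
      (h2u.comp_isClosedEmbedding (isClosedEmbedding_update x i)) (ha i) (x i)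
    simp only [Function.comp_apply, Function.update_eq_self] at this
    refine this.trans (le_of_eq ?_)
    congr 1
    refine lintegral_congr fun t => ?_
    simp only [hG, hD]
    rw [fderiv_comp_deriv _ (hu.differentiable one_ne_zero).differentiableAt
          (hasDerivAt_update x i t).differentiableAt, deriv_update]
  have hpoint : ∀ x, ‖u x‖ₑ ^ γ ≤ (∏ i, ENNReal.ofReal (a i) ^ (1 / 2 : ℝ)) *
      ∏ i, (∫⁻ t, G i (Function.update x i t)) ^ (1 / 2 : ℝ) := fun x => by
    rw [← Finset.prod_mul_distrib]
    calc ‖u x‖ₑ ^ γ = ∏ i, (‖u x‖ₑ ^ a i) ^ (1 / 2 : ℝ) := by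
          rw [Fin.prod_univ_three]
          simp_rw [← ENNReal.rpow_mul]
          have := ha 0
          have := ha 1
          have := ha 2
          rw [← ENNReal.rpow_add_of_nonneg _ _ (by positivity) (by positivity),
            ← ENNReal.rpow_add_of_nonneg _ _ (by positivity) (by positivity)]
          congr 1
          simp only [ha_def]
          linarith
      _ ≤ _ := by
          refine Finset.prod_le_prod' fun i _ => ?_
          rw [← ENNReal.mul_rpow_of_nonneg _ _ (by norm_num)]
          gcongr
          exact hline i x
  have hGt : ∀ i, ∫⁻ x, G i x ≠ ∞ := fun i => ne_top_of_le_ne_top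
    (ENNReal.mul_ne_top (ENNReal.rpow_ne_top_of_nonneg (hq1 i) hNt) (hDt i)) (hHolder i)
  have hG0 : ∀ i, ∫⁻ x, G i x ≠ 0 := fun i h => by
    -- A vanishing integral forces the continuous function `G i`, hence `u`, to vanish.
    rw [lintegral_eq_zero_iff (hGm i)] at h
    have hGc : Continuous (fun x => ‖u x‖ ^ (a i - 1) * ‖D i x‖) :=
      (hu.continuous.norm.rpow_const fun _ => Or.inr (by linarith [ha i])).mul (hDc i).norm
    have hGe : ∀ x, G i x = ENNReal.ofReal (‖u x‖ ^ (a i - 1) * ‖D i x‖) := fun x => by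
      rw [ENNReal.ofReal_mul (by positivity),
        ← ENNReal.ofReal_rpow_of_nonneg (norm_nonneg _) (by linarith [ha i]), ofReal_norm,
        ofReal_norm]
    have hz : (fun x => ‖u x‖ ^ (a i - 1) * ‖D i x‖) = fun _ => (0 : ℝ) := by
      refine (hGc.ae_eq_iff_eq volume continuous_const).1 ?_
      filter_upwards [h] with x hx
      rw [hGe] at hx
      exact le_antisymm (ENNReal.ofReal_eq_zero.1 hx) (by positivity)
    apply hN0
    rw [hN]
    refine (lintegral_congr fun x => ?_).trans lintegral_zero
    have h1 := hline i x
    have h2 : ∀ t, G i (Function.update x i t) = 0 := fun t => by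
      rw [hGe, congrFun hz, ENNReal.ofReal_zero]
    simp only [h2, lintegral_zero, mul_zero, nonpos_iff_eq_zero] at h1
    rw [ENNReal.rpow_eq_zero_iff_of_pos (by linarith [ha i])] at h1
    rw [h1, ENNReal.zero_rpow_of_pos hγ0]
  set P : ℝ≥0∞ := ∏ i, eLpNorm (D i) (ENNReal.ofReal (p i)) volume ^ (1 / 3 : ℝ) with hP
  have hmain : N ≤ c * (N ^ (1 - 3 / (2 * γ)) * P ^ (3 / 2 : ℝ)) := by
    calc N ≤ ∫⁻ x, (∏ i, ENNReal.ofReal (a i) ^ (1 / 2 : ℝ)) *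
          ∏ i, (∫⁻ t, G i (Function.update x i t)) ^ (1 / 2 : ℝ) := lintegral_mono hpoint
      _ = (∏ i, ENNReal.ofReal (a i) ^ (1 / 2 : ℝ)) *
          ∫⁻ x, ∏ i, (∫⁻ t, G i (Function.update x i t)) ^ (1 / 2 : ℝ) :=
        lintegral_const_mul' _ _ (ENNReal.prod_ne_top fun i _ =>
          ENNReal.rpow_ne_top_of_nonneg (by norm_num) ENNReal.ofReal_ne_top)
      _ ≤ (∏ i, ENNReal.ofReal (a i) ^ (1 / 2 : ℝ)) *
          (3 ^ (3 / 2 : ℝ) * ∏ i, (∫⁻ x, G i x) ^ (1 / 2 : ℝ)) := by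
        gcongr
        exact loomis_whitney_three hGm hG0 hGt
      _ = c * ∏ i, (∫⁻ x, G i x) ^ (1 / 2 : ℝ) := by rw [hc, mul_assoc]
      _ ≤ c * ∏ i, (N ^ (1 - 1 / p i) *
            eLpNorm (D i) (ENNReal.ofReal (p i)) volume) ^ (1 / 2 : ℝ) := by
        gcongr with i
        exact hHolder i
      _ = _ := by
        congr 1
        simp_rw [ENNReal.mul_rpow_of_nonneg _ _ (show (0 : ℝ) ≤ 1 / 2 by norm_num)]
        rw [Finset.prod_mul_distrib]
        congr 1
        · rw [Fin.prod_univ_three]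
          simp_rw [← ENNReal.rpow_mul]
          rw [← ENNReal.rpow_add _ _ hN0 hNt, ← ENNReal.rpow_add _ _ hN0 hNt]
          congr 1
          have : 3 / (2 * γ) = (3 / γ) / 2 := by field_simp
          rw [this, hγ, Fin.sum_univ_three]
          ring
        · rw [hP, ← ENNReal.prod_rpow_of_nonneg (by norm_num)]
          refine Finset.prod_congr rfl fun i _ => ?_
          rw [← ENNReal.rpow_mul]
          norm_num
  -- Absorb the power of `N` on the right, then take the power `2/3`.
  have habs : N ^ (3 / (2 * γ)) ≤ c * P ^ (3 / 2 : ℝ) := by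
    calc N ^ (3 / (2 * γ)) = N ^ (-(1 - 3 / (2 * γ))) * N := by
          nth_rewrite 3 [← ENNReal.rpow_one N]
          rw [← ENNReal.rpow_add _ _ hN0 hNt]
          congr 1; ring
      _ ≤ N ^ (-(1 - 3 / (2 * γ))) * (c * (N ^ (1 - 3 / (2 * γ)) * P ^ (3 / 2 : ℝ))) := by
          gcongr
      _ = (N ^ (-(1 - 3 / (2 * γ))) * N ^ (1 - 3 / (2 * γ))) * (c * P ^ (3 / 2 : ℝ)) := by ring
      _ = c * P ^ (3 / 2 : ℝ) := by
          rw [← ENNReal.rpow_add _ _ hN0 hNt, neg_add_cancel, ENNReal.rpow_zero, one_mul]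
  calc eLpNorm u (ENNReal.ofReal γ) volume = (N ^ (3 / (2 * γ))) ^ (2 / 3 : ℝ) := by
        rw [hNu, ← ENNReal.rpow_mul]
        congr 1; field_simp
    _ ≤ (c * P ^ (3 / 2 : ℝ)) ^ (2 / 3 : ℝ) := by gcongr
    _ = c ^ (2 / 3 : ℝ) * P := by
        rw [ENNReal.mul_rpow_of_nonneg _ _ (by norm_num), ← ENNReal.rpow_mul]
        norm_num

/-- **Lemma A.1.** Let `1 ≤ μ, λ < ∞` with `1 < 1/μ + 2/λ ≤ 4` and
`γ = 3λ/(2 − λ(1 − 1/μ))`. Then there is a constant `C = C(μ, λ)` such that every smooth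
compactly supported `φ : ℝ³ → ℝ` satisfies
`‖φ‖_γ ≤ C ‖φ_x‖_λ^{1/3} ‖φ_y‖_λ^{1/3} ‖φ_z‖_μ^{1/3}`. -/
theorem stmt16 (μ lam γ : ℝ) (hμ : 1 ≤ μ) (hlam : 1 ≤ lam)
    (h1 : 1 < 1 / μ + 2 / lam) (h2 : 1 / μ + 2 / lam ≤ 4)
    (hγ : γ = 3 * lam / (2 - lam * (1 - 1 / μ))) :
    ∃ C : ℝ, ∀ φ : E3 → ℝ, ContDiff ℝ (⊤ : ℕ∞) φ → HasCompactSupport φ →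
      Lnorm γ φ
        ≤ C * (Lnorm lam (pd 0 φ)) ^ ((1:ℝ)/3) * (Lnorm lam (pd 1 φ)) ^ ((1:ℝ)/3)
            * (Lnorm μ (pd 2 φ)) ^ ((1:ℝ)/3) := by
  have hμ0 : 0 < μ := by linarith
  have hl0 : 0 < lam := by linarith
  have hden : 0 < 2 - lam * (1 - 1 / μ) := by
    have h : lam * (1 - 1 / μ) < lam * (2 / lam) := mul_lt_mul_of_pos_left (by linarith) hl0
    rw [mul_div_cancel₀ _ hl0.ne'] at h
    linarith
  have hγ0 : 0 < γ := by rw [hγ]; positivity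
  obtain ⟨K, hK, H⟩ := anisotropic_sobolev_s16 (p := ![lam, lam, μ]) (γ := γ)
    (by intro i; fin_cases i <;> simp [hμ, hlam]) hγ0 (by
      rw [hγ, Fin.sum_univ_three]
      simp only [Matrix.cons_val]
      have := hden.ne'
      field_simp
      ring)
  refine ⟨K.toReal, fun φ hφ h2φ => ?_⟩
  have hT : MeasurePreserving (WithLp.toLp 2 : (Fin 3 → ℝ) → E3) :=
    PiLp.volume_preserving_toLp (Fin 3)
  let e : (Fin 3 → ℝ) ≃L[ℝ] E3 := (EuclideanSpace.equiv (Fin 3) ℝ).symm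
  have hφ1 : ContDiff ℝ 1 φ := hφ.of_le (by exact_mod_cast le_top)
  have hpdc : ∀ i, Continuous (pd i φ) := fun i =>
    (hφ1.continuous_fderiv one_ne_zero).clm_apply continuous_const
  have hL := H (φ ∘ e) (hφ1.comp e.contDiff) (h2φ.comp_homeomorph e.toHomeomorph)
  have hD : ∀ i, (fun x => fderiv ℝ (φ ∘ e) x (Pi.single i 1)) = pd i φ ∘ WithLp.toLp 2 := by
    intro i
    funext x
    rw [e.comp_right_fderiv]
    rfl
  have htr : ∀ (f : E3 → ℝ) (q : ENNReal), Continuous f →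
      eLpNorm (f ∘ WithLp.toLp 2) q volume = eLpNorm f q volume := fun f q hf =>
    eLpNorm_comp_measurePreserving hf.aestronglyMeasurable hT
  simp_rw [hD, htr _ _ (hpdc _)] at hL
  rw [show (φ ∘ e : (Fin 3 → ℝ) → ℝ) = φ ∘ WithLp.toLp 2 from rfl,
    htr _ _ hφ.continuous] at hL
  have hfin : ∀ i q, eLpNorm (pd i φ) q volume ≠ ⊤ := fun i q =>
    ((hpdc i).memLp_of_hasCompactSupport (μ := volume)
      (h2φ.fderiv_apply ℝ (ee i))).eLpNorm_ne_top
  have hR := ENNReal.toReal_mono (ENNReal.mul_ne_top hK (ENNReal.prod_ne_top fun i _ =>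
    ENNReal.rpow_ne_top_of_nonneg (by norm_num) (hfin i _))) hL
  rw [ENNReal.toReal_mul, ENNReal.toReal_prod, Fin.prod_univ_three] at hR
  simp only [← ENNReal.toReal_rpow, Matrix.cons_val] at hR
  simpa only [Lnorm, mul_assoc] using hR
end
end

section
/- For every 1 ≤ μ < ∞ there exists a constant C = C(μ) such that for every smooth compactly supported function φ : ℝ³ → ℝ, ‖φ‖_{3μ} ≤ C ‖φ_x‖₂^{1/3} ‖φ_y‖₂^{1/3} ‖φ_z‖_μ^{1/3}. -/
/-!
The inequality follows from the Gagliardo–Nirenberg argument with a different power of `φ` in each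
direction. Write `ν = (2, 2, μ)` and `aᵢ = 1 + 3μ (1 - 1/νᵢ)`. Integrating the derivative of
`|φ| ^ aᵢ` along lines parallel to the `i`-th axis bounds `|φ| ^ aᵢ` by
`aᵢ ∫ |φ| ^ (aᵢ - 1) |∂ᵢφ| dxᵢ` (`enorm_rpow_le_lintegral`), a function which does not depend on
`xᵢ`. As `a₀ + a₁ + a₂ = 6μ`, multiplying the square roots of the three bounds and applying the
Loomis–Whitney inequality (`lintegral_prod_lines_le`) gives
`∫ |φ| ^ (3μ) ≤ K ∏ᵢ (∫ |φ| ^ (aᵢ - 1) |∂ᵢφ|) ^ (1/2)` (`lintegral_rpow_le`).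

By Hölder's inequality the `i`-th integral is at most `‖φ‖_{3μ} ^ (aᵢ - 1) ‖∂ᵢφ‖_{νᵢ}`, so that
`‖φ‖_{3μ} ^ (3μ) ≤ K ‖φ‖_{3μ} ^ (3μ - 3/2) (‖φ_x‖₂ ‖φ_y‖₂ ‖φ_z‖_μ) ^ (1/2)`.
All norms are finite because `φ` has compact support, so the power of `‖φ‖_{3μ}` on the right can
be cancelled, and the claim follows on raising both sides to the power `2/3`.
-/

open MeasureTheory

noncomputable section

open scoped ENNReal NNReal

/-- The fundamental theorem of calculus applied to `|u|ᵃ`, whose derivative is bounded by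
`a |u|ᵃ⁻¹ |u'|`. For `a = 1` the function `|u|` need not be differentiable, but then the bound is
the one for `u` itself. -/
lemma enorm_rpow_le_lintegral {u : ℝ → ℝ} (hu : ContDiff ℝ 1 u) (hc : HasCompactSupport u)
    {a : ℝ} (ha : 1 ≤ a) (t : ℝ) :
    ‖u t‖ₑ ^ a ≤ ENNReal.ofReal a * ∫⁻ s, ‖u s‖ₑ ^ (a - 1) * ‖deriv u s‖ₑ := by
  rcases ha.eq_or_lt with rfl | ha
  · simpa using (HasCompactSupport.enorm_le_lintegral_Ici_deriv hu hc t).trans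
      (setLIntegral_le_lintegral _ _)
  have ha0 : 0 < a := by linarith
  have h1 : ContDiff ℝ 1 (fun s => ‖u s‖ ^ a) := hu.norm_rpow ha
  have h2 : HasCompactSupport (fun s => ‖u s‖ ^ a) :=
    hc.comp_left (g := fun y : ℝ => ‖y‖ ^ a) (by simp [ha0.ne'])
  calc ‖u t‖ₑ ^ a = ‖‖u t‖ ^ a‖ₑ := by
        rw [Real.enorm_rpow_of_nonneg (norm_nonneg _) ha0.le, enorm_norm]
    _ ≤ ∫⁻ s, ‖deriv (fun s => ‖u s‖ ^ a) s‖ₑ :=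
        (HasCompactSupport.enorm_le_lintegral_Ici_deriv h1 h2 t).trans
          (setLIntegral_le_lintegral _ _)
    _ ≤ ∫⁻ s, ENNReal.ofReal a * (‖u s‖ₑ ^ (a - 1) * ‖deriv u s‖ₑ) := by
        gcongr with s
        have h := enorm_fderiv_norm_rpow_le (hu.differentiable one_ne_zero) (x := s)
          (p := a.toNNReal) (by simpa using ha)
        rw [Real.coe_toNNReal a ha0.le] at h
        have hd : ∀ v : ℝ → ℝ, ‖fderiv ℝ v s‖ₑ = ‖deriv v s‖ₑ := fun v => by
          rw [← ofReal_norm, ← ofReal_norm, norm_deriv_eq_norm_fderiv]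
        rw [← hd, ← hd, ← mul_assoc]
        exact h
    _ = _ := by
        rw [lintegral_const_mul']
        simp

/-- The Loomis–Whitney inequality for three distinct functions, up to the constant `3 ^ (3 / 2)`.
It is deduced from the grid-lines lemma, which has a single function in all the factors, by
applying that lemma to `f = ∑ i, F i / ∫ F i`: then `F i ≤ (∫ F i) * f` and `∫ f ≤ 3`. -/
lemma lintegral_prod_lines_le (F : Fin 3 → (Fin 3 → ℝ) → ℝ≥0∞) (hF : ∀ i, Measurable (F i))
    (hfin : ∀ i, ∫⁻ x, F i x ≠ ∞) :
    ∫⁻ x : Fin 3 → ℝ, ∏ i, (∫⁻ t, F i (Function.update x i t)) ^ (1 / 2 : ℝ)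
      ≤ (3 : ℝ≥0∞) ^ (3 / 2 : ℝ) * ∏ i, (∫⁻ x, F i x) ^ (1 / 2 : ℝ) := by
  lift (fun i => ∫⁻ x, F i x) to (Fin 3 → ℝ≥0) using hfin with A hA
  have hA' : ∀ i, ∫⁻ x, F i x = A i := fun i => (congrFun hA i).symm
  -- The integrals are enlarged by `ε > 0`, since one of them may vanish.
  have key : ∀ ε : ℝ≥0, 0 < ε →
      ∫⁻ x : Fin 3 → ℝ, ∏ i, (∫⁻ t, F i (Function.update x i t)) ^ (1 / 2 : ℝ)
        ≤ (((3 : ℝ≥0) ^ (3 / 2 : ℝ) * ∏ i, (A i + ε) ^ (1 / 2 : ℝ) : ℝ≥0) : ℝ≥0∞) := by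
    intro ε hε
    set B : Fin 3 → ℝ≥0 := fun i => A i + ε with hB
    have hB0 : ∀ i, B i ≠ 0 := fun i => (by positivity : 0 < A i + ε).ne'
    set f : (Fin 3 → ℝ) → ℝ≥0∞ := fun x => ∑ i, ((B i)⁻¹ : ℝ≥0) * F i x with hf
    have hfm : Measurable f := by fun_prop
    have hle : ∀ i x, F i x ≤ B i * f x := by
      intro i x
      calc F i x = B i * (((B i)⁻¹ : ℝ≥0) * F i x) := by
            rw [← mul_assoc, ← ENNReal.coe_mul, mul_inv_cancel₀ (hB0 i)]; simp
        _ ≤ B i * f x := by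
            gcongr
            exact Finset.single_le_sum (f := fun i => (((B i)⁻¹ : ℝ≥0) : ℝ≥0∞) * F i x)
              (fun _ _ => zero_le) (Finset.mem_univ i)
    have hint : ∫⁻ x, f x ≤ 3 := by
      rw [hf, lintegral_finsetSum _ (fun i _ => by fun_prop)]
      calc ∑ i, ∫⁻ x, ((B i)⁻¹ : ℝ≥0) * F i x ≤ ∑ i : Fin 3, (1 : ℝ≥0∞) := by
            gcongr with i
            rw [lintegral_const_mul _ (hF i), hA', ← ENNReal.coe_mul, ← ENNReal.coe_one,
              ENNReal.coe_le_coe, ← inv_mul_cancel₀ (hB0 i)]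
            gcongr
            simp [hB]
        _ = 3 := by simp
    have hGN := lintegral_prod_lintegral_pow_le (fun _ : Fin 3 => (volume : Measure ℝ))
      (p := 3 / 2) (by rw [Real.holderConjugate_iff]; norm_num) hfm
    norm_num at hGN
    calc ∫⁻ x : Fin 3 → ℝ, ∏ i, (∫⁻ t, F i (Function.update x i t)) ^ (1 / 2 : ℝ)
        ≤ ∫⁻ x : Fin 3 → ℝ, ∏ i, (B i * ∫⁻ t, f (Function.update x i t)) ^ (1 / 2 : ℝ) := by
          gcongr with x i
          rw [← lintegral_const_mul' _ _ ENNReal.coe_ne_top]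
          gcongr with t
          exact hle i _
      _ = (∏ i, (B i : ℝ≥0∞) ^ (1 / 2 : ℝ)) *
          ∫⁻ x : Fin 3 → ℝ, ∏ i, (∫⁻ t, f (Function.update x i t)) ^ (1 / 2 : ℝ) := by
          rw [← lintegral_const_mul']
          · congr! 2 with x
            rw [← Finset.prod_mul_distrib]
            congr! 1 with i
            rw [ENNReal.mul_rpow_of_nonneg _ _ (by norm_num)]
          · exact ENNReal.prod_ne_top (fun i _ => by simp)
      _ ≤ (∏ i, (B i : ℝ≥0∞) ^ (1 / 2 : ℝ)) * 3 ^ (3 / 2 : ℝ) := by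
          gcongr
          exact hGN.trans (by gcongr; exact hint)
      _ = _ := by
          rw [mul_comm]
          push_cast
          congr 1
          · rw [ENNReal.coe_rpow_of_nonneg _ (by norm_num)]; simp
          · congr! 1 with i
            rw [ENNReal.coe_rpow_of_nonneg _ (by norm_num)]
  have hcont : Continuous (fun ε : ℝ≥0 =>
      (((3 : ℝ≥0) ^ (3 / 2 : ℝ) * ∏ i, (A i + ε) ^ (1 / 2 : ℝ) : ℝ≥0) : ℝ≥0∞)) := by
    refine ENNReal.continuous_coe.comp (continuous_const.mul
      (continuous_finsetProd _ fun i _ => ?_))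
    exact (NNReal.continuous_rpow_const (by norm_num)).comp (by fun_prop)
  have hlim := (hcont.tendsto 0).mono_left (nhdsWithin_le_nhds (s := Set.Ioi 0))
  refine (ge_of_tendsto hlim ?_).trans (le_of_eq ?_)
  · filter_upwards [self_mem_nhdsWithin] with ε hε using key ε hε
  · push_cast
    congr 1
    · rw [ENNReal.coe_rpow_of_nonneg _ (by norm_num)]; simp
    · congr! 1 with i
      rw [ENNReal.coe_rpow_of_nonneg _ (by norm_num), hA']
      simp

lemma lintegral_toLp (f : E3 → ℝ≥0∞) :
    ∫⁻ x : Fin 3 → ℝ, f (WithLp.toLp 2 x) = ∫⁻ x, f x :=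
  (PiLp.volume_preserving_toLp (Fin 3)).lintegral_comp_emb
    (MeasurableEquiv.toLp 2 (Fin 3 → ℝ)).measurableEmbedding f

lemma hasDerivAt_line {φ : E3 → ℝ} (hφ : ContDiff ℝ 1 φ) (x : Fin 3 → ℝ) (i : Fin 3) (t : ℝ) :
    HasDerivAt (fun s => φ (WithLp.toLp 2 (Function.update x i s)))
      (pd i φ (WithLp.toLp 2 (Function.update x i t))) t := by
  have h1 : HasDerivAt (fun s => (WithLp.toLp 2 (Function.update x i s) : E3)) (ee i) t := by
    exact (PiLp.hasFDerivAt_toLp (𝕜 := ℝ) 2 (Function.update x i t)).comp_hasDerivAt t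
      (hasDerivAt_update x i t)
  exact ((hφ.differentiable one_ne_zero) _).hasFDerivAt.comp_hasDerivAt t h1

/-- A weighted Gagliardo inequality: `∫ |φ| ^ ((a₀ + a₁ + a₂) / 2)` is controlled by the product of
the square roots of `∫ |φ| ^ (aᵢ - 1) |∂ᵢφ|`. -/
lemma lintegral_rpow_le {φ : E3 → ℝ} (hφ : ContDiff ℝ 1 φ) (hc : HasCompactSupport φ)
    (a : Fin 3 → ℝ) (ha : ∀ i, 1 ≤ a i)
    (hfin : ∀ i, ∫⁻ x, ‖φ x‖ₑ ^ (a i - 1) * ‖pd i φ x‖ₑ ≠ ∞) :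
    ∫⁻ x, ‖φ x‖ₑ ^ ((∑ i, a i) / 2)
      ≤ ((3 : ℝ≥0∞) ^ (3 / 2 : ℝ) * ∏ i, ENNReal.ofReal (a i) ^ (1 / 2 : ℝ)) *
        ∏ i, (∫⁻ x, ‖φ x‖ₑ ^ (a i - 1) * ‖pd i φ x‖ₑ) ^ (1 / 2 : ℝ) := by
  have hpd : ∀ i, Continuous (pd i φ) := fun i =>
    (hφ.continuous_fderiv one_ne_zero).clm_apply continuous_const
  have hφc := hφ.continuous
  set F : Fin 3 → (Fin 3 → ℝ) → ℝ≥0∞ := fun i x =>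
    ‖φ (WithLp.toLp 2 x)‖ₑ ^ (a i - 1) * ‖pd i φ (WithLp.toLp 2 x)‖ₑ with hF
  have hFi : ∀ i, ∫⁻ x, F i x = ∫⁻ x, ‖φ x‖ₑ ^ (a i - 1) * ‖pd i φ x‖ₑ := fun i =>
    lintegral_toLp (fun x => ‖φ x‖ₑ ^ (a i - 1) * ‖pd i φ x‖ₑ)
  have hFm : ∀ i, Measurable (F i) := by
    intro i
    have := hpd i
    fun_prop
  rw [← lintegral_toLp (fun x => ‖φ x‖ₑ ^ ((∑ i, a i) / 2))]
  calc ∫⁻ x : Fin 3 → ℝ, ‖φ (WithLp.toLp 2 x)‖ₑ ^ ((∑ i, a i) / 2)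
      ≤ ∫⁻ x : Fin 3 → ℝ, (∏ i, ENNReal.ofReal (a i) ^ (1 / 2 : ℝ)) *
          ∏ i, (∫⁻ t, F i (Function.update x i t)) ^ (1 / 2 : ℝ) := by
        gcongr with x
        have h1 : ∀ i, ‖φ (WithLp.toLp 2 x)‖ₑ ^ a i
            ≤ ENNReal.ofReal (a i) * ∫⁻ t, F i (Function.update x i t) := by
          intro i
          have hd := hasDerivAt_line hφ x i
          have hsm : ContDiff ℝ 1 (fun s => φ (WithLp.toLp 2 (Function.update x i s))) :=
            hφ.comp ((PiLp.contDiff_toLp (p := 2)).comp (contDiff_update 1 x i))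
          have hcs : HasCompactSupport (fun s => φ (WithLp.toLp 2 (Function.update x i s))) :=
            (hc.comp_homeomorph (PiLp.homeomorph 2 (fun _ : Fin 3 => ℝ)).symm).comp_isClosedEmbedding
              (isClosedEmbedding_update x i)
          have := enorm_rpow_le_lintegral hsm hcs (ha i) (x i)
          simpa [fun t => (hd t).deriv, hF] using this
        calc ‖φ (WithLp.toLp 2 x)‖ₑ ^ ((∑ i, a i) / 2)
            = ∏ i, (‖φ (WithLp.toLp 2 x)‖ₑ ^ a i) ^ (1 / 2 : ℝ) := by
              simp_rw [← ENNReal.rpow_mul]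
              rw [Fin.prod_univ_three, Fin.sum_univ_three,
                ← ENNReal.rpow_add_of_nonneg, ← ENNReal.rpow_add_of_nonneg]
              · congr 1; ring
              all_goals linarith [ha 0, ha 1, ha 2]
          _ ≤ ∏ i, (ENNReal.ofReal (a i) * ∫⁻ t, F i (Function.update x i t)) ^ (1 / 2 : ℝ) := by
              gcongr with i
              exact h1 i
          _ = _ := by
              rw [← Finset.prod_mul_distrib]
              congr! 1 with i
              rw [ENNReal.mul_rpow_of_nonneg _ _ (by norm_num)]
    _ = (∏ i, ENNReal.ofReal (a i) ^ (1 / 2 : ℝ)) *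
          ∫⁻ x : Fin 3 → ℝ, ∏ i, (∫⁻ t, F i (Function.update x i t)) ^ (1 / 2 : ℝ) :=
        lintegral_const_mul' _ _ (ENNReal.prod_ne_top fun i _ => by simp)
    _ ≤ (∏ i, ENNReal.ofReal (a i) ^ (1 / 2 : ℝ)) *
          ((3 : ℝ≥0∞) ^ (3 / 2 : ℝ) * ∏ i, (∫⁻ x, F i x) ^ (1 / 2 : ℝ)) := by
        gcongr
        exact lintegral_prod_lines_le F hFm (fun i => by rw [hFi]; exact hfin i)
    _ = _ := by
        simp_rw [hFi]
        ring

lemma eLpNorm_ofReal_rpow {f : E3 → ℝ} {r : ℝ} (hr : 0 < r) :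
    eLpNorm f (ENNReal.ofReal r) volume ^ r = ∫⁻ x, ‖f x‖ₑ ^ r := by
  rw [eLpNorm_eq_lintegral_rpow_enorm_toReal (by simpa using hr) ENNReal.ofReal_ne_top,
    ENNReal.toReal_ofReal hr.le, ← ENNReal.rpow_mul, one_div_mul_cancel hr.ne', ENNReal.rpow_one]

/-- Hölder's inequality with exponents `ν / (ν - 1)` and `ν`, including the endpoint `ν = 1`, with
the power of `f` chosen so that its `Lʳ` norm appears. -/
lemma holder_aux {f g : E3 → ℝ} (hf : Continuous f) (hg : Continuous g) {r ν : ℝ}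
    (hr : 0 < r) (hν : 1 ≤ ν) :
    ∫⁻ x, ‖f x‖ₑ ^ (r * (1 - 1 / ν)) * ‖g x‖ₑ
      ≤ eLpNorm f (ENNReal.ofReal r) volume ^ (r * (1 - 1 / ν)) *
        eLpNorm g (ENNReal.ofReal ν) volume := by
  have hν0 : 0 < ν := by linarith
  have h := ENNReal.lintegral_mul_norm_pow_le (μ := (volume : Measure E3))
    (f := fun x => ‖f x‖ₑ ^ r) (g := fun x => ‖g x‖ₑ ^ ν) (by fun_prop) (by fun_prop)
    (p := 1 - 1 / ν) (q := 1 / ν)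
    (by rw [sub_nonneg, div_le_one hν0]; exact hν) (by positivity) (by ring)
  simp only [← ENNReal.rpow_mul, mul_one_div_cancel hν0.ne', ENNReal.rpow_one,
    ← eLpNorm_ofReal_rpow hr, ← eLpNorm_ofReal_rpow hν0] at h
  exact h

/-- Absorbing the lower power of `L` on the right into the left-hand side. -/
lemma real_absorb {L K Q r : ℝ} (hL : 0 ≤ L) (hK : 0 ≤ K) (hQ : 0 ≤ Q)
    (h : L ^ r ≤ K * (L ^ (2 * r - 3) * Q) ^ (1 / 2 : ℝ)) :
    L ≤ K ^ (2 / 3 : ℝ) * Q ^ (1 / 3 : ℝ) := by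
  rcases hL.eq_or_lt with rfl | hL
  · positivity
  have h1 : (L ^ (2 * r - 3) * Q) ^ (1 / 2 : ℝ) = L ^ (r - 3 / 2) * Q ^ (1 / 2 : ℝ) := by
    rw [Real.mul_rpow (by positivity) hQ, ← Real.rpow_mul hL.le]
    congr 2; ring
  have h2 : L ^ r = L ^ (r - 3 / 2) * L ^ (3 / 2 : ℝ) := by
    rw [← Real.rpow_add hL]; congr 1; ring
  rw [h1, h2, mul_left_comm] at h
  have h3 : L ^ (3 / 2 : ℝ) ≤ K * Q ^ (1 / 2 : ℝ) := le_of_mul_le_mul_left h (by positivity)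
  have h4 := Real.rpow_le_rpow (by positivity) h3 (show (0 : ℝ) ≤ 2 / 3 by norm_num)
  rw [Real.mul_rpow hK (by positivity), ← Real.rpow_mul hL.le, ← Real.rpow_mul hQ] at h4
  norm_num at h4 ⊢
  exact h4

/-- **Inequality (A.2).** For every `1 ≤ μ < ∞` there is a constant `C = C(μ)` such that
every smooth compactly supported `φ : ℝ³ → ℝ` satisfies
`‖φ‖_{3μ} ≤ C ‖φ_x‖₂^{1/3} ‖φ_y‖₂^{1/3} ‖φ_z‖_μ^{1/3}`. -/
theorem stmt17 (μ : ℝ) (hμ : 1 ≤ μ) :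
    ∃ C : ℝ, ∀ φ : E3 → ℝ, ContDiff ℝ (⊤ : ℕ∞) φ → HasCompactSupport φ →
      Lnorm (3 * μ) φ
        ≤ C * (Lnorm 2 (pd 0 φ)) ^ ((1:ℝ)/3) * (Lnorm 2 (pd 1 φ)) ^ ((1:ℝ)/3)
            * (Lnorm μ (pd 2 φ)) ^ ((1:ℝ)/3) := by
  have hμ0 : 0 < μ := by linarith
  have hr : 0 < 3 * μ := by linarith
  set ν : Fin 3 → ℝ := ![2, 2, μ] with hν
  have hν1 : ∀ i, 1 ≤ ν i := by
    intro i; fin_cases i <;> simp [hν, hμ]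
  have hν' : ∀ i, 0 ≤ 1 - 1 / ν i := by
    intro i
    rw [sub_nonneg, div_le_one (by linarith [hν1 i])]; exact hν1 i
  -- Chosen so that Hölder's inequality with exponents `ν i / (ν i - 1)` and `ν i`, applied to
  -- `|φ| ^ (a i - 1) * |∂ᵢφ|`, returns the norm `‖φ‖_{3μ}` in every direction `i`.
  set a : Fin 3 → ℝ := fun i => 3 * μ * (1 - 1 / ν i) + 1 with ha
  have hasum : (∑ i, a i) / 2 = 3 * μ := by
    simp [ha, hν, Fin.sum_univ_three]
    field_simp
    ring
  set K : ℝ≥0∞ := (3 : ℝ≥0∞) ^ (3 / 2 : ℝ) * ∏ i, ENNReal.ofReal (a i) ^ (1 / 2 : ℝ) with hK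
  have hKtop : K ≠ ∞ :=
    ENNReal.mul_ne_top (by simp) (ENNReal.prod_ne_top fun i _ => by simp)
  refine ⟨K.toReal ^ (2 / 3 : ℝ), fun φ hφ hc => ?_⟩
  have hφ1 : ContDiff ℝ 1 φ := hφ.of_le (by exact_mod_cast le_top)
  have hpd : ∀ i, Continuous (pd i φ) := fun i =>
    (hφ1.continuous_fderiv one_ne_zero).clm_apply continuous_const
  have hpdc : ∀ i, HasCompactSupport (pd i φ) := fun i => hc.fderiv_apply (𝕜 := ℝ) _
  set M : ℝ≥0∞ := eLpNorm φ (ENNReal.ofReal (3 * μ)) volume with hM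
  set N : Fin 3 → ℝ≥0∞ := fun i => eLpNorm (pd i φ) (ENNReal.ofReal (ν i)) volume with hN
  have hMtop : M ≠ ∞ := (hφ1.continuous.memLp_of_hasCompactSupport hc).eLpNorm_ne_top
  have hNtop : ∀ i, N i ≠ ∞ := fun i =>
    ((hpd i).memLp_of_hasCompactSupport (hpdc i)).eLpNorm_ne_top
  have hH : ∀ i, ∫⁻ x, ‖φ x‖ₑ ^ (a i - 1) * ‖pd i φ x‖ₑ ≤ M ^ (a i - 1) * N i := by
    intro i
    have := holder_aux hφ1.continuous (hpd i) hr (hν1 i)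
    simpa only [ha, add_sub_cancel_right] using this
  have ha0 : ∀ i, 0 ≤ a i - 1 := fun i => by
    have := mul_nonneg hr.le (hν' i)
    simpa [ha] using this
  have hRtop : ∀ i, M ^ (a i - 1) * N i ≠ ∞ := fun i =>
    ENNReal.mul_ne_top (ENNReal.rpow_ne_top_of_nonneg (ha0 i) hMtop) (hNtop i)
  have hmain := lintegral_rpow_le hφ1 hc a (fun i => by linarith [ha0 i])
    (fun i => ne_top_of_le_ne_top (hRtop i) (hH i))
  rw [hasum, ← eLpNorm_ofReal_rpow hr, ← hM, ← hK] at hmain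
  have h2 : M ^ (3 * μ) ≤ K * (M ^ (2 * (3 * μ) - 3) * (N 0 * N 1 * N 2)) ^ (1 / 2 : ℝ) := by
    calc M ^ (3 * μ) ≤ _ := hmain
      _ ≤ K * ∏ i, (M ^ (a i - 1) * N i) ^ (1 / 2 : ℝ) := by
          gcongr with i
          exact hH i
      _ = _ := by
          have he : 2 * (3 * μ) - 3 = (a 0 - 1) + (a 1 - 1) + (a 2 - 1) := by
            rw [← hasum, Fin.sum_univ_three]; ring
          rw [he, ENNReal.rpow_add_of_nonneg _ _ (add_nonneg (ha0 0) (ha0 1)) (ha0 2),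
            ENNReal.rpow_add_of_nonneg _ _ (ha0 0) (ha0 1),
            ENNReal.prod_rpow_of_nonneg (by norm_num), Fin.prod_univ_three]
          congr 2
          ring
  have h3 := ENNReal.toReal_mono (ENNReal.mul_ne_top hKtop
    (ENNReal.rpow_ne_top_of_nonneg (by norm_num) (ENNReal.mul_ne_top
      (ENNReal.rpow_ne_top_of_nonneg (by linarith) hMtop)
      (ENNReal.mul_ne_top (ENNReal.mul_ne_top (hNtop 0) (hNtop 1)) (hNtop 2))))) h2
  simp only [ENNReal.toReal_mul, ← ENNReal.toReal_rpow] at h3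
  have h4 := real_absorb ENNReal.toReal_nonneg ENNReal.toReal_nonneg (by positivity) h3
  rw [Real.mul_rpow (by positivity) (by positivity),
    Real.mul_rpow (by positivity) (by positivity), ← mul_assoc, ← mul_assoc] at h4
  exact h4
end
end
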